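/- Let N≥1 and let K:[0,T]×ℝ^N×ℝ^N→[0,∞) satisfy the weak-(*)-kernel condition for parameters 0<α<2, 0<ζ≤∞, 0≤ω<α, 1≤Λ<∞ (and, when α≥1, α−1<ν<1, 0<s₀≤∞, 0≤τ<∞ with ν+ω<min{N,α}). Fix γ with 0<γ<α−ω when α<1, and max{α−N,0}<γ<α−(ω+ν) when α≥1. Then there exists a constant C, depending only on N and the parameters, such that for all t∈[0,T] and all x∈ℝ^N∖{0}: |T^K_t(|·|^γ)(x)| ≤ C·|x|^{γ−α}·(1+|x|^ω) when 0<α<1, and |T^K_t(|·|^γ)(x)| ≤ C·|x|^{γ−α}·(1+|x|^{ν+ω}) when 1≤α<2, where T^K_t(|·|^γ)(x) = ∫_{ℝ^N} [|x|^γ − |y|^γ] K(t,x,y) dy in the principal value sense. -/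

import Mathlib

/-!
Write `h(z) = (‖x‖^γ - ‖x+z‖^γ) K(t,x,x+z)` for the integrand recentred at `x`, and `R = ‖x‖`.
For `‖z‖ ≥ R/2` one has `|‖x‖^γ - ‖x+z‖^γ| ≤ 3 ‖z‖^γ`, and since `γ + ω < α` the upper bound on the
kernel makes `h` integrable there, with integral `O(R^(γ-α) (1 + R^ω))`.

For `‖z‖ < R/2` and `α < 1`, the first-order bound `2 R^(γ-1) ‖z‖` suffices, so that the principal
value is an absolutely convergent integral (`pv_case_lt_one`).

For `α ≥ 1` the linear Taylor term `-γ R^(γ-2) ⟨x, z⟩ K(t,x,x+z)` is split off on the ball of radius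
`δ = min (R/2) s₁`, with `0 < s₁ < s₀`. The quadratic remainder (`norm_rpow_taylor`) is integrable,
because `‖z‖² ≤ ‖z‖^(1+ν) R^(1-ν)` and `1 + ν > α`; in the shell `s₁ ≤ ‖z‖ < R/2` the first-order
bound is enough, because `‖z‖ ≤ s₁^(-ν) ‖z‖^(1+ν)` there. Both regions are covered by
`integrable_of_radial_bound`. The linear term need not be absolutely integrable; in polar coordinates
its spherical means are controlled by the cancellation condition, so its principal value exists and
is `O(R^(γ-α+ν))` (`linear_pv`, `pv_case_one_le`).

The cancellation condition is formulated with the Hausdorff measure on the sphere, whereas polar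
coordinates produce the measure `Measure.toSphere`. These two are proportional
(`exists_toSphere_eq_smul`): both are invariant under the orthogonal group, which acts transitively
on the sphere, and finite nonzero measures that give equal mass to balls of equal radius are unique
up to a factor (`uniform_measure_unique`).
-/

open MeasureTheory Filter Set
open scoped ENNReal NNReal

noncomputable section

/-- The principal value integral statement `T^K_t f x = L`, i.e.
`lim_{ε→0⁺} ∫_{|x−y|≥ε} [f(x)−f(y)] K(t,x,y) dy = L`. -/
def HasPVIntegral (N : ℕ)
    (K : ℝ → EuclideanSpace ℝ (Fin N) → EuclideanSpace ℝ (Fin N) → ℝ) (t : ℝ)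
    (f : EuclideanSpace ℝ (Fin N) → ℝ) (x : EuclideanSpace ℝ (Fin N)) (L : ℝ) : Prop :=
  Filter.Tendsto (fun ε : ℝ =>
      ∫ y in {y : EuclideanSpace ℝ (Fin N) | ε ≤ ‖x - y‖}, (f x - f y) * K t x y)
    (nhdsWithin 0 (Set.Ioi 0)) (nhds L)

/-- The associated function `k(t,x,z) := K(t,x,x+z)·|z|^{N+α}`. -/
def kAssoc (N : ℕ) (α : ℝ)
    (K : ℝ → EuclideanSpace ℝ (Fin N) → EuclideanSpace ℝ (Fin N) → ℝ)
    (t : ℝ) (x z : EuclideanSpace ℝ (Fin N)) : ℝ :=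
  K t x (x + z) * ‖z‖ ^ ((N : ℝ) + α)

/-- The vector-valued integral `∫_{S^{N−1}} g(σ)·σ dσ` over the unit sphere,
with respect to the (N−1)-dimensional Hausdorff (surface) measure. -/
def sphereVecInt (N : ℕ) (g : EuclideanSpace ℝ (Fin N) → ℝ) : EuclideanSpace ℝ (Fin N) :=
  ∫ σ in Metric.sphere (0 : EuclideanSpace ℝ (Fin N)) 1, g σ • σ ∂(μH[(N : ℝ) - 1])

/-- The weak-(*)-kernel condition on the time interval `[0,T]` (with `T ∈ (0,∞]`). -/
structure WeakStarKernel (N : ℕ) (T : ℝ≥0∞)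
    (K : ℝ → EuclideanSpace ℝ (Fin N) → EuclideanSpace ℝ (Fin N) → ℝ)
    (α : ℝ) (ζ : ℝ≥0∞) (ω Λ ν : ℝ) (s₀ : ℝ≥0∞) (τ : ℝ) : Prop where
  measurable : Measurable fun p : ℝ × EuclideanSpace ℝ (Fin N) × EuclideanSpace ℝ (Fin N) =>
    K p.1 p.2.1 p.2.2
  nonneg : ∀ t x y, 0 ≤ K t x y
  symm : ∀ t x y, 0 ≤ t → ENNReal.ofReal t ≤ T → K t x y = K t y x
  lower : ∀ t x y, 0 ≤ t → ENNReal.ofReal t ≤ T → x ≠ y → ENNReal.ofReal ‖x - y‖ ≤ ζ →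
    Λ⁻¹ ≤ K t x y * ‖x - y‖ ^ ((N : ℝ) + α)
  upper : ∀ t x y, 0 ≤ t → ENNReal.ofReal t ≤ T → x ≠ y →
    K t x y * ‖x - y‖ ^ ((N : ℝ) + α) ≤ Λ * (1 + ‖x - y‖ ^ ω)
  cancel : 1 ≤ α → ∀ t x (s : ℝ), 0 ≤ t → ENNReal.ofReal t ≤ T → 0 < s →
    ENNReal.ofReal s < s₀ →
    ‖sphereVecInt N (fun σ => kAssoc N α K t x (s • σ))‖ ≤ τ * s ^ ν

/-- The (*)-kernel condition on the time interval `[0,T]` (with `T ∈ (0,∞]`):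
as the weak condition, but with the local Hölder continuity of `k` replacing
the cancellation condition when `α ≥ 1`. -/
structure StarKernel (N : ℕ) (T : ℝ≥0∞)
    (K : ℝ → EuclideanSpace ℝ (Fin N) → EuclideanSpace ℝ (Fin N) → ℝ)
    (α : ℝ) (ζ : ℝ≥0∞) (ω Λ ν : ℝ) (s₀ : ℝ≥0∞) (τ : ℝ) : Prop where
  measurable : Measurable fun p : ℝ × EuclideanSpace ℝ (Fin N) × EuclideanSpace ℝ (Fin N) =>
    K p.1 p.2.1 p.2.2
  nonneg : ∀ t x y, 0 ≤ K t x y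
  symm : ∀ t x y, 0 ≤ t → ENNReal.ofReal t ≤ T → K t x y = K t y x
  lower : ∀ t x y, 0 ≤ t → ENNReal.ofReal t ≤ T → x ≠ y → ENNReal.ofReal ‖x - y‖ ≤ ζ →
    Λ⁻¹ ≤ K t x y * ‖x - y‖ ^ ((N : ℝ) + α)
  upper : ∀ t x y, 0 ≤ t → ENNReal.ofReal t ≤ T → x ≠ y →
    K t x y * ‖x - y‖ ^ ((N : ℝ) + α) ≤ Λ * (1 + ‖x - y‖ ^ ω)
  holder : 1 ≤ α → ∀ t x z z', 0 ≤ t → ENNReal.ofReal t ≤ T →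
    ENNReal.ofReal ‖z - z'‖ ≤ s₀ → ENNReal.ofReal ‖z‖ ≤ s₀ →
    |kAssoc N α K t x z - kAssoc N α K t x z'| ≤ τ * ‖z - z'‖ ^ ν

/-- `f : ℝ^N → F` together with all of its derivatives is smooth and bounded,
i.e. `f ∈ C^∞(overline{ℝ^N})`. -/
def SmoothBounded {X F : Type*} [NormedAddCommGroup X] [NormedSpace ℝ X]
    [NormedAddCommGroup F] [NormedSpace ℝ F] (f : X → F) : Prop :=
  ContDiff ℝ (⊤ : ℕ∞) f ∧ ∀ n : ℕ, ∃ C : ℝ, ∀ x, ‖iteratedFDeriv ℝ n f x‖ ≤ C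

/-- `sup_x ‖f x‖` as an extended real number (the `L^∞`-norm for continuous `f`). -/
def supENorm {X F : Type*} [NormedAddCommGroup F] (f : X → F) : ℝ≥0∞ :=
  ⨆ x, ENNReal.ofReal ‖f x‖

/-- The Hölder seminorm `[f]_{C^β} = sup_{x≠y} ‖f x − f y‖/‖x−y‖^β`
as an extended real number. -/
def holderSemiENorm {X F : Type*} [NormedAddCommGroup X] [NormedAddCommGroup F]
    (β : ℝ) (f : X → F) : ℝ≥0∞ :=
  ⨆ x, ⨆ y, ENNReal.ofReal (‖f x - f y‖ / ‖x - y‖ ^ β)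

/-- The Hölder norm `‖f‖_{C^β} = ‖f‖_{L^∞} + [f]_{C^β}` as an extended real number. -/
def holderENorm {X F : Type*} [NormedAddCommGroup X] [NormedAddCommGroup F]
    (β : ℝ) (f : X → F) : ℝ≥0∞ :=
  supENorm f + holderSemiENorm β f

/-- `w` is a (pointwise/classical) solution of `∂ₜ w + T^K_t(w(t,·)) = 0` on `[0,T)×ℝ^N`. -/
def IsLinSolution (N : ℕ) (T : ℝ≥0∞)
    (K : ℝ → EuclideanSpace ℝ (Fin N) → EuclideanSpace ℝ (Fin N) → ℝ)
    (w : ℝ → EuclideanSpace ℝ (Fin N) → ℝ) : Prop :=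
  ∀ t x, 0 ≤ t → ENNReal.ofReal t < T →
    ∃ L : ℝ, HasPVIntegral N K t (w t) x L ∧
      HasDerivWithinAt (fun s => w s x) (-L) (Set.Ici 0) t

/-- `w(t,x)` is smooth on `[0,T)×ℝ^N`. -/
def SmoothOnDomain (N : ℕ) (T : ℝ≥0∞) (w : ℝ → EuclideanSpace ℝ (Fin N) → ℝ) : Prop :=
  ContDiffOn ℝ (⊤ : ℕ∞) (fun p : ℝ × EuclideanSpace ℝ (Fin N) => w p.1 p.2)
    {p : ℝ × EuclideanSpace ℝ (Fin N) | 0 ≤ p.1 ∧ ENNReal.ofReal p.1 < T}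

/-- `w ∈ L^∞(0,T;(L¹∩L^∞)(ℝ^N))`. -/
def BddL1Linfty (N : ℕ) (T : ℝ≥0∞) (w : ℝ → EuclideanSpace ℝ (Fin N) → ℝ) : Prop :=
  ∃ C : ℝ, ∀ t, 0 ≤ t → ENNReal.ofReal t < T →
    (∫⁻ x, ENNReal.ofReal |w t x| ≤ ENNReal.ofReal C) ∧ ∀ x, |w t x| ≤ C

/-- The class `𝒰_r` of test functions (for fixed constants `γ` and `A`). -/
def MemU (N : ℕ) (γ A : ℝ) (r : ℝ) (φ : EuclideanSpace ℝ (Fin N) → ℝ) : Prop :=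
  Measurable φ ∧ Integrable φ ∧ (∫ x, φ x) = 0 ∧
    (∃ x₀ : EuclideanSpace ℝ (Fin N),
      ∫⁻ x, ENNReal.ofReal (|φ x| * ‖x - x₀‖ ^ γ) ≤ ENNReal.ofReal (r ^ γ)) ∧
    (∀ x, |φ x| ≤ A / r ^ (N : ℝ)) ∧ (∫⁻ x, ENNReal.ofReal |φ x|) ≤ 1

/-- `φ` is (the restriction to `ℝ^N` of) a Schwartz function. -/
def IsSchwartz (N : ℕ) (φ : EuclideanSpace ℝ (Fin N) → ℝ) : Prop :=
  ∃ ψ : SchwartzMap (EuclideanSpace ℝ (Fin N)) ℝ, ⇑ψ = φ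

/-- The volume of the unit ball in `ℝ^N`. -/
def ballVol (N : ℕ) : ℝ := (volume (Metric.ball (0 : EuclideanSpace ℝ (Fin N)) 1)).toReal

/-- The special radius `ζ₀ := max{(8/V_N)^{1/N}, 2·11^{1/γ}}`. -/
def zeta0 (N : ℕ) (γ : ℝ) : ℝ :=
  max ((8 / ballVol N) ^ (N : ℝ)⁻¹) (2 * 11 ^ γ⁻¹)

open scoped Topology Pointwise

/-! ### Uniqueness of uniformly distributed measures -/

/-- One half of Christensen's uniqueness theorem for uniformly distributed measures: if balls of
radius `r n → 0` have masses `g n` under `μ` and `h n` under `ν`, independently of the centre, and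
`h n / g n → c`, then `ν ≤ c • μ` on open sets. By Fatou's lemma,
`ν U ≤ liminf (1 / g n) ∫_U μ (U ∩ B(x, r n)) dν(x)`, and Tonelli's theorem bounds the integral by
`h n * μ U`. -/
theorem uniform_measure_le {X : Type*} [MetricSpace X] [SecondCountableTopology X]
    [MeasurableSpace X] [BorelSpace X] (μ ν : Measure X) [IsFiniteMeasure μ] [IsFiniteMeasure ν]
    (r : ℕ → ℝ) (hr : Tendsto r atTop (𝓝 0)) (g h : ℕ → ℝ≥0∞)
    (hg : ∀ n x, μ (Metric.ball x (r n)) = g n) (hh : ∀ n x, ν (Metric.ball x (r n)) = h n)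
    (hg0 : ∀ n, g n ≠ 0) (hgt : ∀ n, g n ≠ ∞) (c : ℝ≥0∞)
    (hc : Tendsto (fun n => h n / g n) atTop (𝓝 c))
    (U : Set X) (hU : IsOpen U) : ν U ≤ c * μ U := by
  have hUm := hU.measurableSet
  have hballm : ∀ n, MeasurableSet {p : X × X | dist p.1 p.2 < r n} := fun n =>
    measurableSet_lt measurable_dist measurable_const
  have hker : ∀ (m : Measure X) [IsFiniteMeasure m] n x,
      m (U ∩ Metric.ball x (r n)) = ∫⁻ y in U, {p : X × X | dist p.1 p.2 < r n}.indicator 1 (x, y) ∂m := by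
    intro m _ n x
    rw [inter_comm, ← Measure.restrict_apply' hUm,
      ← lintegral_indicator_one Metric.isOpen_ball.measurableSet]
    apply lintegral_congr
    intro y
    simp only [indicator, Metric.mem_ball, mem_ofPred_eq, dist_comm]
    rfl
  have hmeas : ∀ n, Measurable fun x => μ (U ∩ Metric.ball x (r n)) := by
    intro n
    simp only [hker μ n]
    exact Measurable.lintegral_prod_right' ((measurable_one).indicator (hballm n))
  have h_integral : ∀ n, ∫⁻ x in U, μ (U ∩ Metric.ball x (r n)) ∂ν ≤ h n * μ U := by
    intro n
    simp only [hker μ n]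
    rw [lintegral_lintegral_swap]
    · calc _ ≤ ∫⁻ y in U, h n ∂μ := by
            apply lintegral_mono
            intro y
            rw [← hh n y]
            refine le_trans (le_of_eq ?_) (measure_mono (inter_subset_right (s := U)))
            rw [hker ν n y]
            apply lintegral_congr
            intro z
            simp only [indicator, mem_ofPred_eq, dist_comm]
            rfl
        _ = _ := by simp
    · exact ((measurable_one).indicator (hballm n)).aemeasurable
  calc ν U = ∫⁻ x in U, 1 ∂ν := by simp
    _ ≤ ∫⁻ x in U, liminf (fun n => μ (U ∩ Metric.ball x (r n)) / g n) atTop ∂ν := by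
        apply setLIntegral_mono' hUm
        intro x hx
        obtain ⟨e, he, heU⟩ := Metric.isOpen_iff.1 hU x hx
        have : Tendsto (fun n => μ (U ∩ Metric.ball x (r n)) / g n) atTop (𝓝 1) := by
          apply tendsto_const_nhds.congr'
          filter_upwards [hr.eventually (gt_mem_nhds he)] with n hn
          rw [inter_eq_self_of_subset_right ((Metric.ball_subset_ball hn.le).trans heU), hg,
            ENNReal.div_self (hg0 n) (hgt n)]
        rw [this.liminf_eq]
    _ ≤ liminf (fun n => ∫⁻ x in U, μ (U ∩ Metric.ball x (r n)) / g n ∂ν) atTop :=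
        lintegral_liminf_le fun n => (hmeas n).div_const _
    _ ≤ liminf (fun n => (h n / g n) * μ U) atTop := by
        refine liminf_le_liminf ?_
        filter_upwards with n
        simp only [div_eq_mul_inv]
        rw [lintegral_mul_const _ (hmeas n), mul_right_comm]
        gcongr
        exact h_integral n
    _ = c * μ U := (ENNReal.Tendsto.mul_const hc (Or.inr (measure_ne_top _ _))).liminf_eq

/-- Two nonzero finite Borel measures on a compact metric space, each giving the same mass to all
balls of equal radius, are proportional. The constant is a subsequential limit of the ratio of the
masses of small balls; compactness of `[0, ∞]` provides it. -/
theorem uniform_measure_unique {X : Type*} [MetricSpace X] [CompactSpace X] [Nonempty X]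
    [MeasurableSpace X] [BorelSpace X] (μ ν : Measure X) [IsFiniteMeasure μ] [IsFiniteMeasure ν]
    (hμ0 : μ ≠ 0) (hν0 : ν ≠ 0)
    (hμ : ∀ r x y, μ (Metric.ball x r) = μ (Metric.ball y r))
    (hν : ∀ r x y, ν (Metric.ball x r) = ν (Metric.ball y r)) :
    ∃ c : ℝ≥0, c ≠ 0 ∧ ν = c • μ := by
  have hpos : ∀ (m : Measure X), m ≠ 0 → (∀ r x y, m (Metric.ball x r) = m (Metric.ball y r)) →
      ∀ r > 0, ∀ x, m (Metric.ball x r) ≠ 0 := by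
    intro m hm0 hm r hr x h0
    obtain ⟨t, -, ht⟩ := isCompact_univ.elim_nhds_subcover (fun y : X => Metric.ball y r)
      (fun y _ => Metric.ball_mem_nhds y hr)
    apply hm0
    rw [← Measure.measure_univ_eq_zero]
    refine measure_mono_null ht ((measure_biUnion_null_iff t.countable_toSet).2 fun y _ => ?_)
    rw [hm r y x, h0]
  obtain ⟨x₀⟩ := ‹Nonempty X›
  let r₀ : ℕ → ℝ := fun n => 1 / ((n : ℝ) + 1)
  have hr₀ : ∀ n, 0 < r₀ n := fun n => by positivity
  obtain ⟨c, -, φ, hφ, hc⟩ := (isCompact_univ (X := ℝ≥0∞)).tendsto_subseq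
    (x := fun n => ν (Metric.ball x₀ (r₀ n)) / μ (Metric.ball x₀ (r₀ n))) (fun _ => mem_univ _)
  have hr : Tendsto (r₀ ∘ φ) atTop (𝓝 0) :=
    tendsto_one_div_add_atTop_nhds_zero_nat.comp hφ.tendsto_atTop
  have h1 := uniform_measure_le μ ν (r₀ ∘ φ) hr
    (fun n => μ (Metric.ball x₀ (r₀ (φ n)))) (fun n => ν (Metric.ball x₀ (r₀ (φ n))))
    (fun n x => hμ _ _ _) (fun n x => hν _ _ _) (fun n => hpos μ hμ0 hμ _ (hr₀ _) _)
    (fun n => measure_ne_top _ _) c hc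
  have h2 := uniform_measure_le ν μ (r₀ ∘ φ) hr
    (fun n => ν (Metric.ball x₀ (r₀ (φ n)))) (fun n => μ (Metric.ball x₀ (r₀ (φ n))))
    (fun n x => hν _ _ _) (fun n x => hμ _ _ _) (fun n => hpos ν hν0 hν _ (hr₀ _) _)
    (fun n => measure_ne_top _ _) c⁻¹ (by
      have := hc.inv
      refine this.congr fun n => ?_
      simp only [Function.comp]
      rw [ENNReal.inv_div (Or.inl (measure_ne_top _ _)) (Or.inl (hpos μ hμ0 hμ _ (hr₀ _) _))])
  have hc0 : c ≠ 0 := by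
    rintro rfl
    exact hν0 (Measure.measure_univ_eq_zero.1 (by simpa using h1 univ isOpen_univ))
  have hct : c ≠ ∞ := by
    rintro rfl
    exact hμ0 (Measure.measure_univ_eq_zero.1 (by simpa using h2 univ isOpen_univ))
  lift c to ℝ≥0 using hct
  have key : ∀ U, IsOpen U → ν U = (c • μ) U := by
    intro U hU
    refine le_antisymm (h1 U hU) ?_
    have := h2 U hU
    calc (c • μ) U = c * μ U := rfl
      _ ≤ c * ((c : ℝ≥0∞)⁻¹ * ν U) := by gcongr
      _ = ν U := by rw [← mul_assoc, ENNReal.mul_inv_cancel hc0 (by simp), one_mul]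
  refine ⟨c, by simpa using hc0, ?_⟩
  exact ext_of_generate_finite _ (BorelSpace.measurable_eq) isPiSystem_isOpen
    (fun U hU => key U hU) (key univ isOpen_univ)

/-! ### Hausdorff measure on the unit sphere -/

theorem lipschitzOnWith_normalize {V : Type*} [NormedAddCommGroup V] [NormedSpace ℝ V] :
    LipschitzOnWith 2 (fun y : V => ‖y‖⁻¹ • y) {y | 1 ≤ ‖y‖} := by
  refine LipschitzOnWith.of_dist_le_mul fun y hy w hw => ?_
  simp only [mem_ofPred_eq] at hy hw
  have hy0 : 0 < ‖y‖ := by linarith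
  have hw0 : 0 < ‖w‖ := by linarith
  rw [dist_eq_norm, dist_eq_norm]
  have h1 : ‖y‖⁻¹ • y - ‖w‖⁻¹ • w = ‖y‖⁻¹ • (y - w) + (‖y‖⁻¹ * (‖w‖ - ‖y‖)) • (‖w‖⁻¹ • w) := by
    have : ‖y‖⁻¹ * (‖w‖ - ‖y‖) = (‖y‖⁻¹ - ‖w‖⁻¹) * ‖w‖ := by field_simp
    rw [this, smul_smul, mul_assoc, mul_inv_cancel₀ hw0.ne', mul_one, smul_sub, sub_smul]
    abel
  have h2 : ‖‖w‖⁻¹ • w‖ = 1 := by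
    rw [norm_smul, norm_inv, norm_norm, inv_mul_cancel₀ hw0.ne']
  have h3 : ‖y‖⁻¹ ≤ 1 := inv_le_one_of_one_le₀ hy
  have h4 : |‖w‖ - ‖y‖| ≤ ‖y - w‖ := by rw [norm_sub_rev]; exact abs_norm_sub_norm_le w y
  rw [h1]
  calc _ ≤ ‖‖y‖⁻¹ • (y - w)‖ + ‖(‖y‖⁻¹ * (‖w‖ - ‖y‖)) • (‖w‖⁻¹ • w)‖ := norm_add_le _ _
    _ = ‖y‖⁻¹ * ‖y - w‖ + ‖y‖⁻¹ * |‖w‖ - ‖y‖| := by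
        rw [norm_smul, norm_smul, h2, norm_inv, norm_norm, norm_mul, norm_inv, norm_norm,
          Real.norm_eq_abs, mul_one]
    _ ≤ 1 * ‖y - w‖ + 1 * ‖y - w‖ := by gcongr
    _ = _ := by push_cast; ring

/-- The unit sphere is covered by the normalisations of the `2 (n + 1)` faces of the cube
`[-1, 1]^{n+1}`, which are Lipschitz images of cubes in `ℝ^n`. -/
theorem hausdorff_sphere_lt_top (n : ℕ) :
    μH[(n : ℝ)] (Metric.sphere (0 : EuclideanSpace ℝ (Fin (n + 1))) 1) < ∞ := by
  let P : Fin (n + 1) → ℝ → (Fin n → ℝ) → EuclideanSpace ℝ (Fin (n + 1)) := fun i s v =>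
    WithLp.toLp 2 (Fin.insertNth (α := fun _ => ℝ) i s v)
  have hP : ∀ i s, ∃ C, LipschitzWith C (P i s) := by
    intro i s
    refine ⟨_, (PiLp.lipschitzWith_toLp 2 (fun _ : Fin (n + 1) => ℝ)).comp
      (LipschitzWith.of_dist_le_mul (K := 1) fun v w => ?_)⟩
    rw [NNReal.coe_one, one_mul, dist_pi_le_iff dist_nonneg]
    intro j
    refine Fin.succAboveCases i ?_ (fun k => ?_) j
    · simp
    · simpa using dist_le_pi_dist v w k
  have hn : ∀ i s v, |s| = 1 → 1 ≤ ‖P i s v‖ := by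
    intro i s v hs
    have := PiLp.norm_apply_le (P i s v) i
    simpa [P, hs] using this
  have himg : ∀ i s, |s| = 1 → μH[(n : ℝ)] ((fun y : EuclideanSpace ℝ (Fin (n + 1)) => ‖y‖⁻¹ • y) ''
      (P i s '' Metric.closedBall 0 1)) < ∞ := by
    intro i s hs
    obtain ⟨C, hC⟩ := hP i s
    have h1 := (lipschitzOnWith_normalize (V := EuclideanSpace ℝ (Fin (n + 1)))).mono
      (s := P i s '' Metric.closedBall 0 1) (by
        rintro _ ⟨v, -, rfl⟩; exact hn i s v hs) |>.hausdorffMeasure_image_le (d := n)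
        (Nat.cast_nonneg n)
    refine h1.trans_lt (ENNReal.mul_lt_top (ENNReal.rpow_lt_top_of_nonneg (by simp) (by simp)) ?_)
    refine (hC.hausdorffMeasure_image_le (d := n) (Nat.cast_nonneg n) _).trans_lt ?_
    refine ENNReal.mul_lt_top (ENNReal.rpow_lt_top_of_nonneg (by simp) (by simp)) ?_
    have := hausdorffMeasure_pi_real (ι := Fin n)
    rw [Fintype.card_fin] at this
    rw [this]
    exact measure_closedBall_lt_top
  -- a unit vector is the normalisation of its rescaling to sup norm one, which lies on a face
  have hcov : Metric.sphere (0 : EuclideanSpace ℝ (Fin (n + 1))) 1 ⊆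
      ⋃ i : Fin (n + 1), ⋃ b : Bool, (fun y : EuclideanSpace ℝ (Fin (n + 1)) => ‖y‖⁻¹ • y) ''
      (P i (if b then 1 else -1) '' Metric.closedBall 0 1) := by
    intro σ hσ
    have hσ1 : ‖σ‖ = 1 := by simpa using hσ
    obtain ⟨i, -, hi⟩ := Finset.exists_max_image Finset.univ (fun j => |σ j|) ⟨0, Finset.mem_univ _⟩
    have hi0 : 0 < |σ i| := by
      by_contra h
      have : σ = 0 := by
        ext j
        have := hi j (Finset.mem_univ _)
        have : |σ j| = 0 := le_antisymm (by linarith) (abs_nonneg _)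
        simpa using this
      rw [this] at hσ1; simp at hσ1
    have hne : σ i ≠ 0 := abs_pos.1 hi0
    simp only [mem_iUnion]
    refine ⟨i, decide (0 < σ i), |σ i|⁻¹ • σ, ⟨fun j => |σ i|⁻¹ * σ (i.succAbove j), ?_, ?_⟩, ?_⟩
    · rw [mem_closedBall_zero_iff, pi_norm_le_iff_of_nonneg zero_le_one]
      intro j
      rw [norm_mul, norm_inv, Real.norm_eq_abs, Real.norm_eq_abs, abs_abs, inv_mul_le_one₀ hi0]
      exact hi _ (Finset.mem_univ _)
    · ext j
      refine Fin.succAboveCases i ?_ (fun k => ?_) j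
      · rcases lt_or_gt_of_ne hne with h | h
        · simp [P, not_lt.2 h.le, abs_of_neg h]; field_simp
        · simp [P, h, abs_of_pos h]; field_simp
      · simp [P]
    · simp only
      rw [norm_smul, hσ1, norm_inv, Real.norm_eq_abs, abs_abs, mul_one, inv_inv, smul_smul,
        mul_inv_cancel₀ hi0.ne', one_smul]
  refine (measure_mono hcov).trans_lt ?_
  refine (measure_iUnion_le _).trans_lt ?_
  rw [tsum_fintype]
  refine ENNReal.sum_lt_top.2 fun i _ => (measure_iUnion_le _).trans_lt ?_
  rw [tsum_fintype]
  refine ENNReal.sum_lt_top.2 fun b _ => himg _ _ ?_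
  cases b <;> simp

/-- Dropping a coordinate is `1`-Lipschitz and maps the sphere onto a set containing the open unit
ball of `ℝ^n`. -/
theorem hausdorff_sphere_ne_zero (n : ℕ) :
    μH[(n : ℝ)] (Metric.sphere (0 : EuclideanSpace ℝ (Fin (n + 1))) 1) ≠ 0 := by
  let π : EuclideanSpace ℝ (Fin (n + 1)) → Fin n → ℝ := fun σ i => σ i.succ
  have hπ : LipschitzWith 1 π := LipschitzWith.of_dist_le_mul fun v w => by
    rw [NNReal.coe_one, one_mul, dist_pi_le_iff dist_nonneg]
    intro i
    have := PiLp.norm_apply_le (v - w) i.succ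
    simpa [π, dist_eq_norm] using this
  have hsub : {v : Fin n → ℝ | ∑ i, v i ^ 2 < 1} ⊆ π '' Metric.sphere 0 1 := by
    intro v hv
    simp only [mem_ofPred_eq] at hv
    refine ⟨WithLp.toLp 2 (Fin.cons (√(1 - ∑ i, v i ^ 2)) v : Fin (n + 1) → ℝ), ?_, ?_⟩
    · rw [mem_sphere_zero_iff_norm, EuclideanSpace.norm_eq]
      simp [Fin.sum_univ_succ, Real.sq_sqrt (sub_nonneg.2 hv.le)]
    · ext i; simp [π]
  intro h0
  have h1 := hπ.hausdorffMeasure_image_le (d := n) (Nat.cast_nonneg n)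
    (Metric.sphere (0 : EuclideanSpace ℝ (Fin (n + 1))) 1)
  have h2 := hausdorffMeasure_pi_real (ι := Fin n)
  rw [Fintype.card_fin] at h2
  rw [h0, mul_zero, h2] at h1
  have hopen : IsOpen {v : Fin n → ℝ | ∑ i, v i ^ 2 < 1} :=
    isOpen_lt (by fun_prop) continuous_const
  exact (hopen.measure_pos volume ⟨0, by simp⟩).not_ge ((measure_mono hsub).trans h1)

/-- The orthogonal group acts transitively on the unit sphere (by reflections). -/
theorem exists_isometry_sphere (n : ℕ) (x y : Metric.sphere (0 : EuclideanSpace ℝ (Fin n)) 1) :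
    ∃ e : EuclideanSpace ℝ (Fin n) ≃ₗᵢ[ℝ] EuclideanSpace ℝ (Fin n), e x = y :=
  ⟨_, Submodule.reflection_sub (v := (x : EuclideanSpace ℝ (Fin n))) (w := y) (by simp)⟩

theorem image_coe_ball_sphere (n : ℕ) (x y : Metric.sphere (0 : EuclideanSpace ℝ (Fin n)) 1) (r : ℝ)
    (e : EuclideanSpace ℝ (Fin n) ≃ₗᵢ[ℝ] EuclideanSpace ℝ (Fin n)) (he : e x = y) :
    e '' (((↑) : Metric.sphere (0 : EuclideanSpace ℝ (Fin n)) 1 → EuclideanSpace ℝ (Fin n)) ''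
      Metric.ball x r) = (↑) '' Metric.ball y r := by
  rw [Subtype.image_ball, Subtype.image_ball]
  rw [image_inter e.injective, LinearIsometryEquiv.image_ball, he]
  congr 1
  have := LinearIsometryEquiv.image_sphere e 0 1
  rw [map_zero] at this
  exact this

/-- The surface measure from polar coordinates is a positive multiple of the `n`-dimensional
Hausdorff measure on the unit sphere of `ℝ^{n+1}`: both are rotation invariant, hence uniformly
distributed, finite and nonzero. The value of the constant is not needed. -/
theorem exists_toSphere_eq_smul (n : ℕ) :
    ∃ c : ℝ≥0, c ≠ 0 ∧ (volume : Measure (EuclideanSpace ℝ (Fin (n + 1)))).toSphere =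
      c • (μH[(n : ℝ)] : Measure (Metric.sphere (0 : EuclideanSpace ℝ (Fin (n + 1))) 1)) := by
  have hiso : Isometry ((↑) : Metric.sphere (0 : EuclideanSpace ℝ (Fin (n + 1))) 1 →
      EuclideanSpace ℝ (Fin (n + 1))) :=
    isometry_subtype_coe
  have hcoe : ∀ s : Set (Metric.sphere (0 : EuclideanSpace ℝ (Fin (n + 1))) 1),
      μH[(n : ℝ)] s = μH[(n : ℝ)] (((↑) : _ → EuclideanSpace ℝ (Fin (n + 1))) '' s) := fun s =>
    (hiso.hausdorffMeasure_image (Or.inl (Nat.cast_nonneg n)) s).symm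
  have huniv : μH[(n : ℝ)] (univ : Set (Metric.sphere (0 : EuclideanSpace ℝ (Fin (n + 1))) 1)) =
      μH[(n : ℝ)] (Metric.sphere (0 : EuclideanSpace ℝ (Fin (n + 1))) 1) := by
    rw [hcoe, image_univ, Subtype.range_coe]
  have : IsFiniteMeasure (μH[(n : ℝ)] : Measure (Metric.sphere (0 : EuclideanSpace ℝ (Fin (n + 1))) 1)) :=
    ⟨by rw [huniv]; exact hausdorff_sphere_lt_top n⟩
  have : Nonempty (Metric.sphere (0 : EuclideanSpace ℝ (Fin (n + 1))) 1) :=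
    (NormedSpace.sphere_nonempty.2 zero_le_one).to_subtype
  refine uniform_measure_unique _ _ ?_ (Measure.toSphere_ne_zero _) ?_ ?_
  · intro h
    apply hausdorff_sphere_ne_zero n
    rw [← huniv, h]; rfl
  · intro r x y
    obtain ⟨e, he⟩ := exists_isometry_sphere _ x y
    rw [hcoe, hcoe, ← image_coe_ball_sphere _ x y r e he]
    exact (e.toIsometryEquiv.hausdorffMeasure_image _ _).symm
  · intro r x y
    obtain ⟨e, he⟩ := exists_isometry_sphere _ x y
    rw [Measure.toSphere_apply' _ Metric.isOpen_ball.measurableSet,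
      Measure.toSphere_apply' _ Metric.isOpen_ball.measurableSet,
      ← image_coe_ball_sphere _ x y r e he]
    congr 1
    have h1 : Ioo (0 : ℝ) 1 • (e '' ((↑) '' Metric.ball x r)) =
        e '' (Ioo (0 : ℝ) 1 • ((↑) '' Metric.ball x r)) := by
      rw [← image2_smul, ← image2_smul]
      exact (image_image2_distrib_right fun a b => map_smul e a b).symm
    rw [h1, ← e.measurePreserving.measure_preimage_emb e.toHomeomorph.measurableEmbedding (e '' _),
      preimage_image_eq _ e.injective]

/-! ### Polar coordinates -/

/-- Integration in polar coordinates for an integrable, not necessarily radial, function. -/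
theorem integral_polar (n : ℕ) (f : EuclideanSpace ℝ (Fin (n + 1)) → ℝ) (hf : Integrable f) :
    ∫ z, f z = ∫ s in Ioi (0 : ℝ), s ^ n *
      ∫ σ, f (s • (σ : EuclideanSpace ℝ (Fin (n + 1)))) ∂(volume : Measure (EuclideanSpace ℝ (Fin (n + 1)))).toSphere := by
  let μ : Measure (EuclideanSpace ℝ (Fin (n + 1))) := volume
  have hdim : Module.finrank ℝ (EuclideanSpace ℝ (Fin (n + 1))) - 1 = n := by simp
  have hmp := μ.measurePreserving_homeomorphUnitSphereProd
  rw [hdim] at hmp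
  have hemb := (homeomorphUnitSphereProd (EuclideanSpace ℝ (Fin (n + 1)))).measurableEmbedding
  let G : Metric.sphere (0 : EuclideanSpace ℝ (Fin (n + 1))) 1 × Ioi (0 : ℝ) → ℝ :=
    fun p => f ((p.2 : ℝ) • (p.1 : EuclideanSpace ℝ (Fin (n + 1))))
  have hG : ∀ x : ({(0)}ᶜ : Set (EuclideanSpace ℝ (Fin (n + 1)))),
      G (homeomorphUnitSphereProd _ x) = f x := by
    intro x
    have := congrArg Subtype.val ((homeomorphUnitSphereProd _).symm_apply_apply x)
    simp only [homeomorphUnitSphereProd_symm_apply_coe] at this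
    simp only [G, this]
  have hGi : Integrable G (μ.toSphere.prod (.volumeIoiPow n)) := by
    rw [← hmp.integrable_comp_emb hemb]
    have : (G ∘ homeomorphUnitSphereProd (EuclideanSpace ℝ (Fin (n + 1)))) = f ∘ Subtype.val :=
      funext hG
    rw [this, ← integrableOn_iff_comap_subtypeVal (measurableSet_singleton _).compl]
    exact hf.integrableOn
  calc ∫ z, f z = ∫ x : ({(0)}ᶜ : Set (EuclideanSpace ℝ (Fin (n + 1)))), f x ∂(μ.comap (↑)) := by
        rw [integral_subtype_comap (measurableSet_singleton _).compl f, restrict_compl_singleton]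
    _ = ∫ p, G p ∂μ.toSphere.prod (.volumeIoiPow n) := by
        rw [← hmp.integral_comp hemb]
        simp only [hG]
    _ = ∫ s : Ioi (0 : ℝ), ∫ σ, f ((s : ℝ) • (σ : EuclideanSpace ℝ (Fin (n + 1)))) ∂μ.toSphere
          ∂.volumeIoiPow n := integral_prod_symm G hGi
    _ = _ := by
      simp only [Measure.volumeIoiPow, ENNReal.ofReal]
      rw [integral_withDensity_eq_integral_smul,
        integral_subtype_comap measurableSet_Ioi fun a : ℝ ↦ Real.toNNReal (a ^ n) •
          ∫ σ, f (a • (σ : EuclideanSpace ℝ (Fin (n + 1)))) ∂μ.toSphere,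
        setIntegral_congr_fun measurableSet_Ioi fun x hx ↦ ?_]
      · rw [NNReal.smul_def, Real.coe_toNNReal _ (pow_nonneg hx.out.le _)]; rfl
      · exact (measurable_subtype_coe.pow_const _).real_toNNReal

/-! ### Radial integrals -/

/-- The surface area of the unit sphere of `ℝ^{n+1}`. -/
noncomputable def sphereArea (n : ℕ) : ℝ :=
  ((n : ℝ) + 1) * volume.real (Metric.ball (0 : EuclideanSpace ℝ (Fin (n + 1))) 1)

theorem sphereArea_nonneg (n : ℕ) : 0 ≤ sphereArea n := by unfold sphereArea; positivity

/-- The integral of `‖z‖^(p-(n+1))` over `{‖z‖ ∈ S}` in polar coordinates. -/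
theorem radial_aux (n : ℕ) (p : ℝ) (S : Set ℝ) (hS : MeasurableSet S)
    (h : IntegrableOn (fun s : ℝ => s ^ (p - 1)) (Ioi 0 ∩ S)) :
    Integrable (fun z : EuclideanSpace ℝ (Fin (n + 1)) =>
      S.indicator (fun s => s ^ (p - (n + 1))) ‖z‖) ∧
    ∫ z : EuclideanSpace ℝ (Fin (n + 1)), S.indicator (fun s => s ^ (p - (n + 1))) ‖z‖ =
      sphereArea n * ∫ s in Ioi 0 ∩ S, s ^ (p - 1) := by
  have hdim : Module.finrank ℝ (EuclideanSpace ℝ (Fin (n + 1))) = n + 1 := by simp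
  have hEq : EqOn (fun s : ℝ => s ^ n • S.indicator (fun s => s ^ (p - (n + 1))) s)
      (S.indicator fun s => s ^ (p - 1)) (Ioi 0) := by
    intro s hs
    have hs : 0 < s := hs
    by_cases h : s ∈ S
    · simp only [indicator_of_mem h, smul_eq_mul]
      rw [← Real.rpow_natCast, ← Real.rpow_add hs]; ring_nf
    · simp [indicator_of_notMem h]
  constructor
  · rw [integrable_fun_norm_addHaar volume (f := S.indicator (fun s => s ^ (p - (n + 1)))), hdim,
      Nat.add_sub_cancel, integrableOn_congr_fun hEq measurableSet_Ioi]
    unfold IntegrableOn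
    rw [integrable_indicator_iff hS, IntegrableOn, Measure.restrict_restrict hS, inter_comm]
    exact h
  · rw [integral_fun_norm_addHaar volume (S.indicator (fun s => s ^ (p - (n + 1)))), hdim,
      Nat.add_sub_cancel, setIntegral_congr_fun measurableSet_Ioi hEq, setIntegral_indicator hS,
      sphereArea]
    simp [mul_assoc]

theorem radial_near (n : ℕ) (p ρ : ℝ) (hp : 0 < p) (hρ : 0 < ρ) :
    Integrable (fun z : EuclideanSpace ℝ (Fin (n + 1)) =>
      (Iio ρ).indicator (fun s => s ^ (p - (n + 1))) ‖z‖) ∧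
    ∫ z : EuclideanSpace ℝ (Fin (n + 1)), (Iio ρ).indicator (fun s => s ^ (p - (n + 1))) ‖z‖ =
      sphereArea n * (ρ ^ p / p) := by
  have hset : Ioi (0 : ℝ) ∩ Iio ρ = Ioo 0 ρ := rfl
  have := radial_aux n p (Iio ρ) measurableSet_Iio (by
    rw [hset, intervalIntegral.integrableOn_Ioo_rpow_iff hρ]; linarith)
  refine ⟨this.1, this.2.trans ?_⟩
  rw [hset, ← integral_Ioc_eq_integral_Ioo, ← intervalIntegral.integral_of_le hρ.le,
    integral_rpow (Or.inl (by linarith))]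
  simp [Real.zero_rpow hp.ne']

theorem radial_far (n : ℕ) (p ρ : ℝ) (hp : p < 0) (hρ : 0 < ρ) :
    Integrable (fun z : EuclideanSpace ℝ (Fin (n + 1)) =>
      (Ici ρ).indicator (fun s => s ^ (p - (n + 1))) ‖z‖) ∧
    ∫ z : EuclideanSpace ℝ (Fin (n + 1)), (Ici ρ).indicator (fun s => s ^ (p - (n + 1))) ‖z‖ =
      sphereArea n * (ρ ^ p / (-p)) := by
  have hset : Ioi (0 : ℝ) ∩ Ici ρ = Ici ρ :=
    inter_eq_self_of_subset_right fun s hs => lt_of_lt_of_le hρ hs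
  have := radial_aux n p (Ici ρ) measurableSet_Ici (by
    rw [hset, integrableOn_Ici_iff_integrableOn_Ioi]
    exact integrableOn_Ioi_rpow_of_lt (by linarith) hρ)
  refine ⟨this.1, this.2.trans ?_⟩
  rw [hset, integral_Ici_eq_integral_Ioi, integral_Ioi_rpow_of_lt (by linarith) hρ, sub_add_cancel,
    div_neg, neg_div]

/-- The quantitative integral estimate behind both cases of the theorem. The bound near the origin
is integrable because `α < b`, the bound at infinity because `γ + ω < α`, and the constant is
uniform in the scale `R` and the amplitude `A`. -/
theorem integrable_of_radial_bound (n : ℕ) (α ω γ b : ℝ) (hω : 0 ≤ ω) (hb : α < b)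
    (hγ : γ + ω < α) :
    ∃ C : ℝ, 0 ≤ C ∧ ∀ (R A : ℝ) (g : EuclideanSpace ℝ (Fin (n + 1)) → ℝ), 0 < R → 0 ≤ A →
      AEStronglyMeasurable g volume →
      (∀ z, 0 < ‖z‖ → ‖z‖ < R / 2 → |g z| ≤ A * R ^ (γ - b) *
        (‖z‖ ^ (b - α - (n + 1)) + ‖z‖ ^ (b + ω - α - (n + 1)))) →
      (∀ z, R / 2 ≤ ‖z‖ → |g z| ≤ A *
        (‖z‖ ^ (γ - α - (n + 1)) + ‖z‖ ^ (γ + ω - α - (n + 1)))) →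
      Integrable g ∧ |∫ z, g z| ≤ C * A * R ^ (γ - α) * (1 + R ^ ω) := by
  set C1 := sphereArea n * ((1 / 2) ^ (b - α) / (b - α)) with hC1
  set C2 := sphereArea n * ((1 / 2) ^ (b + ω - α) / (b + ω - α)) with hC2
  set C3 := sphereArea n * ((1 / 2) ^ (γ - α) / (-(γ - α))) with hC3
  set C4 := sphereArea n * ((1 / 2) ^ (γ + ω - α) / (-(γ + ω - α))) with hC4
  have hA := sphereArea_nonneg n
  have h1 : 0 ≤ C1 := mul_nonneg hA (div_nonneg (by positivity) (by linarith))
  have h2 : 0 ≤ C2 := mul_nonneg hA (div_nonneg (by positivity) (by linarith))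
  have h3 : 0 ≤ C3 := mul_nonneg hA (div_nonneg (by positivity) (by linarith))
  have h4 : 0 ≤ C4 := mul_nonneg hA (div_nonneg (by positivity) (by linarith))
  refine ⟨C1 + C2 + C3 + C4, by positivity, ?_⟩
  intro R A g hR hA0 hg hnear hfar
  have hρ : 0 < R / 2 := by positivity
  obtain ⟨i1, e1⟩ := radial_near n (b - α) (R / 2) (by linarith) hρ
  obtain ⟨i2, e2⟩ := radial_near n (b + ω - α) (R / 2) (by linarith) hρ
  obtain ⟨i3, e3⟩ := radial_far n (γ - α) (R / 2) (by linarith) hρ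
  obtain ⟨i4, e4⟩ := radial_far n (γ + ω - α) (R / 2) (by linarith) hρ
  have hI := ((i1.add i2).const_mul (A * R ^ (γ - b))).add ((i3.add i4).const_mul A)
  have hbd : ∀ᵐ z : EuclideanSpace ℝ (Fin (n + 1)), ‖g z‖ ≤
      A * R ^ (γ - b) * ((Iio (R / 2)).indicator (fun s => s ^ (b - α - (n + 1))) ‖z‖
      + (Iio (R / 2)).indicator (fun s => s ^ (b + ω - α - (n + 1))) ‖z‖)
      + A * ((Ici (R / 2)).indicator (fun s => s ^ (γ - α - (n + 1))) ‖z‖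
      + (Ici (R / 2)).indicator (fun s => s ^ (γ + ω - α - (n + 1))) ‖z‖) := by
    filter_upwards [Measure.ae_ne volume (0 : EuclideanSpace ℝ (Fin (n + 1)))] with z hz
    have hz0 : 0 < ‖z‖ := norm_pos_iff.2 hz
    rw [Real.norm_eq_abs]
    rcases lt_or_ge ‖z‖ (R / 2) with h | h
    · simpa [indicator, h, not_le.2 h] using hnear z hz0 h
    · simpa [indicator, h, not_lt.2 h] using hfar z h
  refine ⟨hI.mono' hg hbd, ?_⟩
  have := norm_integral_le_of_norm_le hI hbd
  rw [Real.norm_eq_abs] at this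
  refine this.trans ?_
  rw [integral_add' ((i1.add i2).const_mul (A * R ^ (γ - b))) ((i3.add i4).const_mul A),
    integral_const_mul, integral_const_mul, integral_add' i1 i2, integral_add' i3 i4, e1, e2, e3, e4]
  have hhalf : ∀ q : ℝ, (R / 2) ^ q = R ^ q * (1 / 2) ^ q := fun q => by
    rw [← Real.mul_rpow hR.le (by norm_num)]; ring_nf
  have r1 : R ^ (γ - b) * R ^ (b - α) = R ^ (γ - α) := by
    rw [← Real.rpow_add hR]; ring_nf
  have r2 : R ^ (γ - b) * R ^ (b + ω - α) = R ^ (γ - α) * R ^ ω := by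
    rw [← Real.rpow_add hR, ← Real.rpow_add hR]; ring_nf
  have r4 : R ^ (γ + ω - α) = R ^ (γ - α) * R ^ ω := by
    rw [← Real.rpow_add hR]; ring_nf
  have hX : 0 ≤ R ^ (γ - α) := by positivity
  have hY : 0 ≤ R ^ ω := by positivity
  calc _ = A * ((R ^ (γ - b) * R ^ (b - α)) * C1 + (R ^ (γ - b) * R ^ (b + ω - α)) * C2
        + R ^ (γ - α) * C3 + R ^ (γ + ω - α) * C4) := by
        rw [hC1, hC2, hC3, hC4, hhalf, hhalf, hhalf, hhalf]; ring
    _ = A * R ^ (γ - α) * (C1 + R ^ ω * C2 + C3 + R ^ ω * C4) := by rw [r1, r2, r4]; ring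
    _ ≤ A * R ^ (γ - α) * ((C1 + C2 + C3 + C4) * (1 + R ^ ω)) := by
        gcongr
        nlinarith [mul_nonneg hY h1, mul_nonneg hY h3]
    _ = _ := by ring

/-! ### Taylor estimates for powers of the norm -/

/-- Bernoulli's inequality for `u` gives the sign of the remainder, and Bernoulli's inequality for
`u⁻¹` bounds it from above. -/
theorem rpow_taylor (γ u : ℝ) (hγ0 : 0 < γ) (hγ1 : γ < 1) (hu : 1 / 2 ≤ u) :
    |1 - u ^ γ + γ * (u - 1)| ≤ (u - 1) ^ 2 := by
  have hu0 : 0 < u := by linarith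
  have h1 : u ^ γ ≤ 1 + γ * (u - 1) := by
    have := rpow_one_add_le_one_add_mul_self (s := u - 1) (by linarith) hγ0.le hγ1.le
    simpa using this
  have h2 : (u ^ γ)⁻¹ ≤ 1 + γ * (u⁻¹ - 1) := by
    have hi : 0 < u⁻¹ := inv_pos.2 hu0
    have := rpow_one_add_le_one_add_mul_self (s := u⁻¹ - 1) (by linarith) hγ0.le hγ1.le
    rw [add_sub_cancel, Real.inv_rpow hu0.le] at this
    exact this
  have hp : 0 < u ^ γ := by positivity
  have hd : 1 / 2 ≤ u + γ * (1 - u) := by nlinarith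
  have h3 : u ≤ u ^ γ * (u + γ * (1 - u)) := by
    have := mul_le_mul_of_nonneg_left h2 (mul_pos hu0 hp).le
    have e1 : u * u ^ γ * (u ^ γ)⁻¹ = u := by field_simp
    have e2 : u * u ^ γ * (1 + γ * (u⁻¹ - 1)) = u ^ γ * (u + γ * (1 - u)) := by field_simp
    rwa [e1, e2] at this
  rw [abs_le]
  constructor
  · nlinarith [sq_nonneg (u - 1)]
  · -- the remainder times the denominator `u + γ (1 - u) ≥ 1 / 2` is at most `γ (1 - γ) (u - 1)²`
    have h4 : (1 - u ^ γ + γ * (u - 1)) * (u + γ * (1 - u)) ≤ γ * (1 - γ) * (u - 1) ^ 2 := by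
      nlinarith
    have h5 : γ * (1 - γ) ≤ 1 / 4 := by nlinarith [sq_nonneg (γ - 1 / 2)]
    have h6 : 0 ≤ 1 - u ^ γ + γ * (u - 1) := by linarith
    nlinarith [sq_nonneg (u - 1), mul_le_mul_of_nonneg_left hd h6,
      mul_le_mul_of_nonneg_right h5 (sq_nonneg (u - 1))]

/-- Second-order Taylor estimate for `‖·‖^γ` at `x`, in the region where `x + z` stays away from
the origin. -/
theorem norm_rpow_taylor {V : Type*} [NormedAddCommGroup V] [InnerProductSpace ℝ V] (γ : ℝ)
    (hγ0 : 0 < γ) (hγ1 : γ < 1) (x z : V) (hx : x ≠ 0) (hz : ‖z‖ < ‖x‖ / 2) :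
    |‖x‖ ^ γ - ‖x + z‖ ^ γ + γ * ‖x‖ ^ (γ - 2) * inner ℝ x z| ≤ 2 * ‖x‖ ^ (γ - 2) * ‖z‖ ^ 2 := by
  set R := ‖x‖ with hR
  have hR0 : 0 < R := norm_pos_iff.2 hx
  set r := ‖x + z‖ with hr
  have hsq : r ^ 2 = R ^ 2 + 2 * inner ℝ x z + ‖z‖ ^ 2 := norm_add_sq_real x z
  have habs : |r - R| ≤ ‖z‖ := by
    have := abs_norm_sub_norm_le (x + z) x
    simpa using this
  have hlow : R / 2 ≤ r := by have := (abs_le.1 habs).1; linarith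
  have hsq2 : (r - R) ^ 2 ≤ ‖z‖ ^ 2 := sq_le_sq' (by linarith [(abs_le.1 habs).1]) (abs_le.1 habs).2
  have hu : 1 / 2 ≤ r / R := by rw [le_div_iff₀ hR0]; linarith
  have hT := rpow_taylor γ (r / R) hγ0 hγ1 hu
  have hr0 : 0 ≤ r := by positivity
  rw [Real.div_rpow hr0 hR0.le] at hT
  have e2 : R ^ (γ - 2) = R ^ γ / R ^ 2 := by
    rw [Real.rpow_sub hR0]; norm_num
  have hRγ : 0 < R ^ γ := by positivity
  have hI : inner ℝ x z = R * (r - R) + ((r - R) ^ 2 - ‖z‖ ^ 2) / 2 := by nlinarith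
  have key : R ^ γ - r ^ γ + γ * R ^ (γ - 2) * inner ℝ x z =
      R ^ γ * (1 - r ^ γ / R ^ γ + γ * (r / R - 1)) +
        R ^ (γ - 2) * (γ * (((r - R) ^ 2 - ‖z‖ ^ 2) / 2)) := by
    rw [hI, e2]; field_simp; ring
  have hP : 0 < R ^ (γ - 2) := by positivity
  rw [key]
  calc _ ≤ |R ^ γ * (1 - r ^ γ / R ^ γ + γ * (r / R - 1))| +
        |R ^ (γ - 2) * (γ * (((r - R) ^ 2 - ‖z‖ ^ 2) / 2))| := abs_add_le _ _
    _ ≤ R ^ γ * (r / R - 1) ^ 2 + R ^ (γ - 2) * (1 * ‖z‖ ^ 2) := by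
        rw [abs_mul, abs_mul, abs_of_pos hRγ, abs_of_pos hP, abs_mul, abs_of_pos hγ0]
        gcongr
        rw [abs_le]
        constructor <;> nlinarith [sq_nonneg (r - R)]
    _ = R ^ (γ - 2) * (r - R) ^ 2 + R ^ (γ - 2) * ‖z‖ ^ 2 := by
        rw [e2]; field_simp
    _ ≤ R ^ (γ - 2) * ‖z‖ ^ 2 + R ^ (γ - 2) * ‖z‖ ^ 2 := by gcongr
    _ = _ := by ring

theorem norm_rpow_first_order {V : Type*} [NormedAddCommGroup V] [InnerProductSpace ℝ V] (γ : ℝ)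
    (hγ0 : 0 < γ) (hγ1 : γ < 1) (x z : V) (hx : x ≠ 0) (hz : ‖z‖ < ‖x‖ / 2) :
    |‖x‖ ^ γ - ‖x + z‖ ^ γ| ≤ 2 * ‖x‖ ^ (γ - 1) * ‖z‖ := by
  have h := norm_rpow_taylor γ hγ0 hγ1 x z hx hz
  have hR0 : 0 < ‖x‖ := norm_pos_iff.2 hx
  have hin := abs_real_inner_le_norm x z
  have e : ‖x‖ ^ (γ - 1) = ‖x‖ ^ (γ - 2) * ‖x‖ := by
    rw [← Real.rpow_add_one hR0.ne']; ring_nf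
  have hP : 0 < ‖x‖ ^ (γ - 2) := by positivity
  have h2 : |γ * ‖x‖ ^ (γ - 2) * inner ℝ x z| ≤ ‖x‖ ^ (γ - 2) * (‖x‖ * ‖z‖) := by
    rw [abs_mul, abs_mul, abs_of_pos hγ0, abs_of_pos hP]
    calc _ ≤ 1 * ‖x‖ ^ (γ - 2) * (‖x‖ * ‖z‖) := by gcongr
      _ = _ := by ring
  have h3 : |‖x‖ ^ γ - ‖x + z‖ ^ γ| ≤ 2 * ‖x‖ ^ (γ - 2) * ‖z‖ ^ 2 + ‖x‖ ^ (γ - 2) * (‖x‖ * ‖z‖) := by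
    have := abs_sub (‖x‖ ^ γ - ‖x + z‖ ^ γ + γ * ‖x‖ ^ (γ - 2) * inner ℝ x z)
      (γ * ‖x‖ ^ (γ - 2) * inner ℝ x z)
    rw [add_sub_cancel_right] at this
    linarith
  have h4 : ‖x‖ ^ (γ - 2) * ‖z‖ ^ 2 ≤ ‖x‖ ^ (γ - 2) * (‖x‖ / 2 * ‖z‖) := by
    rw [sq]; gcongr
  rw [e]
  nlinarith

theorem norm_rpow_far {V : Type*} [NormedAddCommGroup V] (γ : ℝ)
    (hγ0 : 0 < γ) (hγ1 : γ < 1) (x z : V) (hz : ‖x‖ / 2 ≤ ‖z‖) :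
    |‖x‖ ^ γ - ‖x + z‖ ^ γ| ≤ 3 * ‖z‖ ^ γ := by
  have h1 : ∀ a, 0 ≤ a → a ≤ 3 * ‖z‖ → a ^ γ ≤ 3 * ‖z‖ ^ γ := by
    intro a ha h
    calc a ^ γ ≤ (3 * ‖z‖) ^ γ := by gcongr
      _ = 3 ^ γ * ‖z‖ ^ γ := Real.mul_rpow (by norm_num) (norm_nonneg _)
      _ ≤ 3 ^ (1 : ℝ) * ‖z‖ ^ γ := by gcongr; norm_num
      _ = _ := by norm_num
  have ha := h1 ‖x‖ (norm_nonneg _) (by linarith [norm_nonneg z])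
  have hb := h1 ‖x + z‖ (norm_nonneg _) (by linarith [norm_add_le x z])
  have ha0 : 0 ≤ ‖x‖ ^ γ := by positivity
  have hb0 : 0 ≤ ‖x + z‖ ^ γ := by positivity
  rw [abs_le]; constructor <;> linarith

/-! ### Principal value of the linear term -/

/-- The sphere integral of the cancellation condition, rewritten over the subtype. -/
theorem sphereVecInt_eq (n : ℕ) (g : EuclideanSpace ℝ (Fin (n + 1)) → ℝ) :
    sphereVecInt (n + 1) g =
      ∫ σ : Metric.sphere (0 : EuclideanSpace ℝ (Fin (n + 1))) 1,
        g σ • (σ : EuclideanSpace ℝ (Fin (n + 1))) ∂μH[(n : ℝ)] := by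
  have hiso : Isometry ((↑) : Metric.sphere (0 : EuclideanSpace ℝ (Fin (n + 1))) 1 →
      EuclideanSpace ℝ (Fin (n + 1))) := isometry_subtype_coe
  have hmap := hiso.map_hausdorffMeasure (d := n) (Or.inl (Nat.cast_nonneg n))
  have hemb : MeasurableEmbedding ((↑) : Metric.sphere (0 : EuclideanSpace ℝ (Fin (n + 1))) 1 →
      EuclideanSpace ℝ (Fin (n + 1))) := MeasurableEmbedding.subtype_coe Metric.isClosed_sphere.measurableSet
  rw [Subtype.range_coe] at hmap
  have hn : ((n + 1 : ℕ) : ℝ) - 1 = n := by push_cast; ring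
  rw [sphereVecInt, hn, ← hmap, hemb.integral_map]

/-- The principal value of the linear Taylor term `⟨x, z⟩ κ(z)` over the ball of radius `δ`. In
polar coordinates the integral over the sphere of radius `s` is `s^(-α) ⟨x, ∫ k(sσ) σ dσ⟩` up to
the constant `c`, so by cancellation it is `O(s^(ν-α))`, which is integrable at zero since
`ν > α - 1`. -/
theorem linear_pv (n : ℕ) (c : ℝ≥0)
    (hc : (volume : Measure (EuclideanSpace ℝ (Fin (n + 1)))).toSphere =
      c • (μH[(n : ℝ)] : Measure (Metric.sphere (0 : EuclideanSpace ℝ (Fin (n + 1))) 1)))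
    (hc0 : c ≠ 0)
    (α ω ν Λ τ δ : ℝ) (hα : 0 < α) (hω : 0 ≤ ω) (hΛ : 0 ≤ Λ) (hν : α - 1 < ν) (hδ : 0 < δ)
    (κ : EuclideanSpace ℝ (Fin (n + 1)) → ℝ) (hκm : Measurable κ) (hκ0 : ∀ z, 0 ≤ κ z)
    (hκ : ∀ z, z ≠ 0 → κ z * ‖z‖ ^ (((n + 1 : ℕ) : ℝ) + α) ≤ Λ * (1 + ‖z‖ ^ ω))
    (hcan : ∀ s, 0 < s → s < δ → ‖sphereVecInt (n + 1)
      (fun σ => κ (s • σ) * ‖s • σ‖ ^ (((n + 1 : ℕ) : ℝ) + α))‖ ≤ τ * s ^ ν)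
    (x : EuclideanSpace ℝ (Fin (n + 1))) :
    (∀ ε > 0, IntegrableOn (fun z => (Metric.ball 0 δ).indicator (fun z => inner ℝ x z * κ z) z)
      {z | ε ≤ ‖z‖}) ∧
    ∃ L : ℝ, Tendsto (fun ε : ℝ => ∫ z in {z | ε ≤ ‖z‖},
        (Metric.ball 0 δ).indicator (fun z => inner ℝ x z * κ z) z) (𝓝[>] 0) (𝓝 L) ∧
      |L| ≤ c * ‖x‖ * τ * (δ ^ (1 + ν - α) / (1 + ν - α)) := by
  set ℓ : EuclideanSpace ℝ (Fin (n + 1)) → ℝ :=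
    fun z => (Metric.ball 0 δ).indicator (fun z => inner ℝ x z * κ z) z with hℓ
  have hℓm : Measurable ℓ :=
    ((measurable_const.inner measurable_id).mul hκm).indicator measurableSet_ball
  have hSm : ∀ ε : ℝ, MeasurableSet {z : EuclideanSpace ℝ (Fin (n + 1)) | ε ≤ ‖z‖} := fun ε =>
    measurableSet_le measurable_const measurable_norm
  have h_integral : ∀ ε > 0, IntegrableOn ℓ {z | ε ≤ ‖z‖} := by
    intro ε hε
    have h1 : IntegrableOn (fun z => inner ℝ x z * κ z) ({z | ε ≤ ‖z‖} ∩ Metric.ball 0 δ) := by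
      refine Measure.integrableOn_of_bounded (M := ‖x‖ * δ * (Λ * (1 + δ ^ ω) /
          ε ^ (((n + 1 : ℕ) : ℝ) + α)))
        ((measure_mono inter_subset_right).trans_lt measure_ball_lt_top).ne
        ((measurable_const.inner measurable_id).mul hκm).aestronglyMeasurable ?_
      filter_upwards [ae_restrict_mem ((hSm ε).inter measurableSet_ball)] with z hz
      have hz1 : ε ≤ ‖z‖ := hz.1
      have hz2 : ‖z‖ < δ := by simpa using hz.2
      have hz0 : z ≠ 0 := norm_pos_iff.1 (hε.trans_le hz1)
      have hk := hκ z hz0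
      have hb : κ z ≤ Λ * (1 + δ ^ ω) / ε ^ (((n + 1 : ℕ) : ℝ) + α) := by
        rw [le_div_iff₀ (by positivity)]
        calc κ z * ε ^ (((n + 1 : ℕ) : ℝ) + α) ≤ κ z * ‖z‖ ^ (((n + 1 : ℕ) : ℝ) + α) := by
              have := hκ0 z
              gcongr
          _ ≤ Λ * (1 + ‖z‖ ^ ω) := hk
          _ ≤ _ := by gcongr
      rw [norm_mul, Real.norm_of_nonneg (hκ0 z)]
      have hin : ‖(inner ℝ x z : ℝ)‖ ≤ ‖x‖ * ‖z‖ := norm_inner_le_norm x z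
      have := hκ0 z
      calc _ ≤ (‖x‖ * ‖z‖) * _ := mul_le_mul hin hb this (by positivity)
        _ ≤ _ := by gcongr
    rw [IntegrableOn, hℓ]
    rw [integrable_indicator_iff measurableSet_ball, IntegrableOn,
      Measure.restrict_restrict measurableSet_ball, inter_comm]
    exact h1
  refine ⟨h_integral, ?_⟩
  let S := (volume : Measure (EuclideanSpace ℝ (Fin (n + 1)))).toSphere
  let Q : ℝ → ℝ := fun s => s ^ n * ∫ σ : Metric.sphere (0 : EuclideanSpace ℝ (Fin (n + 1))) 1,
    inner ℝ x (s • (σ : EuclideanSpace ℝ (Fin (n + 1)))) *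
      κ (s • (σ : EuclideanSpace ℝ (Fin (n + 1)))) ∂S
  have hsm : Measurable fun p : ℝ × Metric.sphere (0 : EuclideanSpace ℝ (Fin (n + 1))) 1 =>
      p.1 • (p.2 : EuclideanSpace ℝ (Fin (n + 1))) :=
    measurable_fst.smul (measurable_subtype_coe.comp measurable_snd)
  have hQm : StronglyMeasurable Q := by
    refine (stronglyMeasurable_id.pow n).mul ?_
    have : StronglyMeasurable fun p : ℝ × Metric.sphere (0 : EuclideanSpace ℝ (Fin (n + 1))) 1 =>
        inner ℝ x (p.1 • (p.2 : EuclideanSpace ℝ (Fin (n + 1)))) *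
        κ (p.1 • (p.2 : EuclideanSpace ℝ (Fin (n + 1)))) :=
      ((measurable_const.inner hsm).mul (hκm.comp hsm)).stronglyMeasurable
    exact this.integral_prod_right' (ν := S)
  have hnorm : ∀ (s : ℝ) (σ : Metric.sphere (0 : EuclideanSpace ℝ (Fin (n + 1))) 1), 0 < s →
      ‖s • (σ : EuclideanSpace ℝ (Fin (n + 1)))‖ = s := by
    intro s σ hs
    rw [norm_smul, norm_eq_of_mem_sphere, mul_one, Real.norm_of_nonneg hs.le]
  have hfin : IsFiniteMeasure (μH[(n : ℝ)] :
      Measure (Metric.sphere (0 : EuclideanSpace ℝ (Fin (n + 1))) 1)) := by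
    constructor
    have h1 : S univ < ∞ := measure_lt_top _ _
    change (volume : Measure (EuclideanSpace ℝ (Fin (n + 1)))).toSphere univ < ∞ at h1
    rw [hc, Measure.smul_apply, ENNReal.smul_def, smul_eq_mul] at h1
    exact ENNReal.lt_top_of_mul_ne_top_right h1.ne (by simpa using hc0)
  have hQ : ∀ s, 0 < s → s < δ → |Q s| ≤ c * ‖x‖ * τ * s ^ (ν - α) := by
    intro s hs hsδ
    set k : EuclideanSpace ℝ (Fin (n + 1)) → ℝ :=
      fun σ => κ (s • σ) * ‖s • σ‖ ^ (((n + 1 : ℕ) : ℝ) + α) with hk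
    have hki : Integrable (fun σ : Metric.sphere (0 : EuclideanSpace ℝ (Fin (n + 1))) 1 =>
        k σ • (σ : EuclideanSpace ℝ (Fin (n + 1)))) μH[(n : ℝ)] := by
      have hss : Measurable fun σ : Metric.sphere (0 : EuclideanSpace ℝ (Fin (n + 1))) 1 =>
        s • (σ : EuclideanSpace ℝ (Fin (n + 1))) := measurable_subtype_coe.const_smul s
      refine Integrable.of_bound (C := Λ * (1 + s ^ ω)) ?_ ?_
      · exact (((hκm.comp hss).mul (hss.norm.pow_const _)).smul
          measurable_subtype_coe).aestronglyMeasurable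
      · filter_upwards with σ
        rw [norm_smul, norm_eq_of_mem_sphere, mul_one, Real.norm_of_nonneg
          (mul_nonneg (hκ0 _) (by positivity))]
        have h0 : s • (σ : EuclideanSpace ℝ (Fin (n + 1))) ≠ 0 := by
          rw [← norm_pos_iff, hnorm s σ hs]; exact hs
        have := hκ _ h0
        simpa only [hnorm s σ hs] using this
    have hval : Q s = c * s ^ (-α) * inner ℝ x (sphereVecInt (n + 1) k) := by
      have h1 : ∀ σ : Metric.sphere (0 : EuclideanSpace ℝ (Fin (n + 1))) 1,
          inner ℝ x (s • (σ : EuclideanSpace ℝ (Fin (n + 1)))) *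
          κ (s • (σ : EuclideanSpace ℝ (Fin (n + 1)))) =
          s ^ (-(n : ℝ) - α) * inner ℝ x (k σ • (σ : EuclideanSpace ℝ (Fin (n + 1)))) := by
        intro σ
        simp only [hk, inner_smul_right, hnorm s σ hs]
        have : s ^ (-(n : ℝ) - α) * s ^ (((n + 1 : ℕ) : ℝ) + α) = s := by
          rw [← Real.rpow_add hs]; push_cast
          rw [show -(n : ℝ) - α + (n + 1 + α) = 1 by ring, Real.rpow_one]
        linear_combination (-(inner ℝ x (σ : EuclideanSpace ℝ (Fin (n + 1)))) *
          κ (s • (σ : EuclideanSpace ℝ (Fin (n + 1))))) * this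
      have h2 : s ^ n * s ^ (-(n : ℝ) - α) = s ^ (-α) := by
        rw [← Real.rpow_natCast, ← Real.rpow_add hs]; ring_nf
      simp only [Q, S, h1]
      rw [integral_const_mul, hc, integral_smul_nnreal_measure, integral_inner hki,
        ← sphereVecInt_eq, ← h2, NNReal.smul_def, smul_eq_mul]
      ring
    rw [hval, abs_mul, abs_of_nonneg (by positivity)]
    have h3 := abs_real_inner_le_norm x (sphereVecInt (n + 1) k)
    calc _ ≤ c * s ^ (-α) * (‖x‖ * (τ * s ^ ν)) := by
          have := hcan s hs hsδ
          gcongr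
          exact h3.trans (by gcongr)
      _ = _ := by rw [sub_eq_add_neg, Real.rpow_add hs]; ring
  have hmaj : IntegrableOn (fun s : ℝ => c * ‖x‖ * τ * s ^ (ν - α)) (Ioo 0 δ) := by
    refine Integrable.const_mul ?_ _
    exact (intervalIntegral.integrableOn_Ioo_rpow_iff hδ).2 (by linarith)
  have hpolar : ∀ ε > 0, ∫ z in {z | ε ≤ ‖z‖}, ℓ z = ∫ s in Ioo 0 δ, (Ici ε).indicator Q s := by
    intro ε hε
    rw [← integral_indicator (hSm ε), integral_polar n _ ((integrable_indicator_iff (hSm ε)).2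
      (h_integral ε hε)), show Ioo 0 δ = Ioi 0 ∩ Iio δ from rfl, ← setIntegral_indicator measurableSet_Iio]
    refine setIntegral_congr_fun measurableSet_Ioi fun s hs => ?_
    have hs : 0 < s := hs
    by_cases h1 : ε ≤ s <;> by_cases h2 : s < δ <;>
      simp [indicator, hnorm s _ hs, h1, h2, Q, S, hℓ]
  refine ⟨∫ s in Ioo 0 δ, Q s, ?_, ?_⟩
  · have := tendsto_integral_filter_of_dominated_convergence
      (μ := volume.restrict (Ioo 0 δ)) (l := 𝓝[>] (0 : ℝ))
      (F := fun ε s => (Ici ε).indicator Q s) (f := Q)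
      (fun s : ℝ => c * ‖x‖ * τ * s ^ (ν - α))
      (Eventually.of_forall fun ε => (hQm.indicator measurableSet_Ici).aestronglyMeasurable)
      (Eventually.of_forall fun ε => by
        filter_upwards [ae_restrict_mem measurableSet_Ioo] with s hs
        exact (norm_indicator_le_norm_self _ _).trans (hQ s hs.1 hs.2))
      hmaj (by
        filter_upwards [ae_restrict_mem measurableSet_Ioo] with s hs
        apply tendsto_const_nhds.congr'
        filter_upwards [Ioo_mem_nhdsGT hs.1] with ε hε
        rw [indicator_of_mem (show s ∈ Ici ε from hε.2.le)])
    refine this.congr' ?_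
    filter_upwards [self_mem_nhdsWithin] with ε hε
    exact (hpolar ε hε).symm
  · have hb : ∀ᵐ s ∂volume.restrict (Ioo 0 δ), ‖Q s‖ ≤ c * ‖x‖ * τ * s ^ (ν - α) := by
      filter_upwards [ae_restrict_mem measurableSet_Ioo] with s hs
      exact hQ s hs.1 hs.2
    refine (norm_integral_le_of_norm_le hmaj hb).trans (le_of_eq ?_)
    rw [integral_const_mul, ← integral_Ioc_eq_integral_Ioo,
      ← intervalIntegral.integral_of_le hδ.le, integral_rpow (Or.inl (by linarith))]
    rw [show ν - α + 1 = 1 + ν - α by ring, Real.zero_rpow (by linarith), sub_zero]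

/-- For an integrable function the principal value is the ordinary integral. -/
theorem tendsto_setIntegral_norm_ge (n : ℕ) (g : EuclideanSpace ℝ (Fin (n + 1)) → ℝ)
    (hg : Integrable g) :
    Tendsto (fun ε : ℝ => ∫ z in {z | ε ≤ ‖z‖}, g z) (𝓝[>] 0) (𝓝 (∫ z, g z)) := by
  have hSm : ∀ ε : ℝ, MeasurableSet {z : EuclideanSpace ℝ (Fin (n + 1)) | ε ≤ ‖z‖} := fun ε =>
    measurableSet_le measurable_const measurable_norm
  simp_rw [← integral_indicator (hSm _)]
  refine tendsto_integral_filter_of_dominated_convergence (fun z => ‖g z‖)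
    (Eventually.of_forall fun ε => hg.1.indicator (hSm ε))
    (Eventually.of_forall fun ε => Eventually.of_forall fun z => norm_indicator_le_norm_self _ _)
    hg.norm ?_
  filter_upwards [Measure.ae_ne volume (0 : EuclideanSpace ℝ (Fin (n + 1)))] with z hz
  apply tendsto_const_nhds.congr'
  filter_upwards [Ioo_mem_nhdsGT (norm_pos_iff.2 hz)] with ε hε
  rw [indicator_of_mem (show z ∈ {z | ε ≤ ‖z‖} from hε.2.le)]

/-- The principal value exists once the integrand, recentred at `x`, splits into an integrable part
`g` and a multiple of a function `ℓ` possessing a principal value at the origin. -/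
theorem hasPVIntegral_of_split (n : ℕ)
    (K : ℝ → EuclideanSpace ℝ (Fin (n + 1)) → EuclideanSpace ℝ (Fin (n + 1)) → ℝ) (t : ℝ)
    (f : EuclideanSpace ℝ (Fin (n + 1)) → ℝ) (x : EuclideanSpace ℝ (Fin (n + 1)))
    (g ℓ : EuclideanSpace ℝ (Fin (n + 1)) → ℝ) (a L : ℝ) (hg : Integrable g)
    (hsplit : ∀ z, (f x - f (x + z)) * K t x (x + z) = g z + a * ℓ z)
    (hℓ : ∀ ε > 0, IntegrableOn ℓ {z | ε ≤ ‖z‖})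
    (hL : Tendsto (fun ε : ℝ => ∫ z in {z | ε ≤ ‖z‖}, ℓ z) (𝓝[>] 0) (𝓝 L)) :
    HasPVIntegral (n + 1) K t f x ((∫ z, g z) + a * L) := by
  have hSm : ∀ ε : ℝ, MeasurableSet {z : EuclideanSpace ℝ (Fin (n + 1)) | ε ≤ ‖z‖} := fun ε =>
    measurableSet_le measurable_const measurable_norm
  have hSm' : ∀ ε : ℝ, MeasurableSet {y : EuclideanSpace ℝ (Fin (n + 1)) | ε ≤ ‖x - y‖} := fun ε =>
    measurableSet_le measurable_const (measurable_const.sub measurable_id).norm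
  unfold HasPVIntegral
  refine ((tendsto_setIntegral_norm_ge n g hg).add (hL.const_mul a)).congr' ?_
  filter_upwards [self_mem_nhdsWithin] with ε hε
  rw [← integral_const_mul, ← integral_add hg.integrableOn ((hℓ ε hε).const_mul a)]
  rw [← integral_indicator (hSm' ε), ← integral_indicator (hSm ε),
    ← integral_add_left_eq_self (({y | ε ≤ ‖x - y‖} : Set _).indicator
      fun y => (f x - f y) * K t x y) x]
  refine integral_congr_ae (Eventually.of_forall fun z => ?_)
  simp [indicator, hsplit]

/-! ### The two ranges of `α` -/

/-- The upper kernel bound, with the power `‖z‖^(n+1+α)` moved to the other side and a further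
factor `‖z‖^p` included. -/
theorem kernel_rpow_bound (n : ℕ) (α ω Λ p : ℝ) (κ : EuclideanSpace ℝ (Fin (n + 1)) → ℝ)
    (hκ : ∀ z, z ≠ 0 → κ z * ‖z‖ ^ (((n + 1 : ℕ) : ℝ) + α) ≤ Λ * (1 + ‖z‖ ^ ω))
    (z : EuclideanSpace ℝ (Fin (n + 1))) (hz : 0 < ‖z‖) :
    ‖z‖ ^ p * κ z ≤ Λ * (‖z‖ ^ (p - α - (n + 1)) + ‖z‖ ^ (p + ω - α - (n + 1))) := by
  have h := mul_le_mul_of_nonneg_left (hκ z (norm_pos_iff.1 hz))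
    (Real.rpow_nonneg hz.le (p - α - (n + 1)))
  have e1 : ‖z‖ ^ p = ‖z‖ ^ (p - α - (n + 1)) * ‖z‖ ^ (((n + 1 : ℕ) : ℝ) + α) := by
    rw [← Real.rpow_add hz]; congr 1; push_cast; ring
  have e2 : ‖z‖ ^ (p + ω - α - (n + 1)) = ‖z‖ ^ (p - α - (n + 1)) * ‖z‖ ^ ω := by
    rw [← Real.rpow_add hz]; congr 1; ring
  rw [e1, e2]
  linarith

/-- The range `α < 1`, where a first-order bound already makes the integrand integrable. The
hypotheses on `K` are the ones the kernel condition provides at the fixed pair `(t, x)`. -/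
theorem pv_case_lt_one (n : ℕ) (α ω Λ γ : ℝ) (hα : α < 1) (hω : 0 ≤ ω) (hΛ : 0 ≤ Λ)
    (hγ0 : 0 < γ) (hγ : γ + ω < α) :
    ∃ C : ℝ, 0 < C ∧
      ∀ (K : ℝ → EuclideanSpace ℝ (Fin (n + 1)) → EuclideanSpace ℝ (Fin (n + 1)) → ℝ) (t : ℝ)
        (x : EuclideanSpace ℝ (Fin (n + 1))), x ≠ 0 →
        Measurable (fun z => K t x (x + z)) → (∀ z, 0 ≤ K t x (x + z)) →
        (∀ z, z ≠ 0 → K t x (x + z) * ‖z‖ ^ (((n + 1 : ℕ) : ℝ) + α) ≤ Λ * (1 + ‖z‖ ^ ω)) →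
        ∃ L : ℝ, HasPVIntegral (n + 1) K t (fun y => ‖y‖ ^ γ) x L ∧
          |L| ≤ C * ‖x‖ ^ (γ - α) * (1 + ‖x‖ ^ ω) := by
  obtain ⟨C₀, hC₀, hC⟩ := integrable_of_radial_bound n α ω γ 1 hω hα hγ
  refine ⟨C₀ * (3 * Λ) + 1, by positivity, fun K t x hx hm h0 hup => ?_⟩
  have hγ1 : γ < 1 := by linarith
  have hR : 0 < ‖x‖ := norm_pos_iff.2 hx
  have hb := fun p z => kernel_rpow_bound n α ω Λ p _ hup z
  obtain ⟨hi, hle⟩ := hC ‖x‖ (3 * Λ) (fun z => (‖x‖ ^ γ - ‖x + z‖ ^ γ) * K t x (x + z)) hR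
    (by positivity)
    (((by fun_prop : Measurable fun z : EuclideanSpace ℝ (Fin (n + 1)) =>
      ‖x‖ ^ γ - ‖x + z‖ ^ γ).mul hm).aestronglyMeasurable)
    (by
      intro z hz hzR
      rw [abs_mul, abs_of_nonneg (h0 z)]
      have h1 := norm_rpow_first_order γ hγ0 hγ1 x z hx hzR
      have h2 := hb 1 z hz
      rw [Real.rpow_one] at h2
      have h3 := h0 z
      have h4 : 0 ≤ ‖z‖ * K t x (x + z) := by positivity
      calc _ ≤ (2 * ‖x‖ ^ (γ - 1) * ‖z‖) * K t x (x + z) := by gcongr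
        _ ≤ 3 * ‖x‖ ^ (γ - 1) * (‖z‖ * K t x (x + z)) := by
            have : 0 ≤ ‖x‖ ^ (γ - 1) * (‖z‖ * K t x (x + z)) := by positivity
            linarith
        _ ≤ 3 * ‖x‖ ^ (γ - 1) * _ := mul_le_mul_of_nonneg_left h2 (by positivity)
        _ = _ := by ring)
    (by
      intro z hzR
      rw [abs_mul, abs_of_nonneg (h0 z)]
      have h1 := norm_rpow_far γ hγ0 hγ1 x z hzR
      have h2 := hb γ z (by linarith)
      have h3 := h0 z
      calc _ ≤ (3 * ‖z‖ ^ γ) * K t x (x + z) := by gcongr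
        _ = 3 * (‖z‖ ^ γ * K t x (x + z)) := by ring
        _ ≤ 3 * _ := mul_le_mul_of_nonneg_left h2 (by positivity)
        _ = _ := by ring)
  refine ⟨_, hasPVIntegral_of_split n K t _ x _ (fun _ => 0) 0 0 hi (fun z => by simp)
    (fun ε _ => ?_) ?_, ?_⟩
  · exact integrableOn_zero
  · simp
  · simp only [mul_zero, add_zero]
    refine hle.trans ?_
    gcongr
    linarith

/-- The range `α ≥ 1`. The linear Taylor term is subtracted on the ball of radius
`δ = min (‖x‖ / 2) s₁`, where cancellation is available, and estimated separately; `s₁` is any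
radius below which the cancellation condition holds. -/
theorem pv_case_one_le (n : ℕ) (α ω Λ ν τ γ s₁ : ℝ) (hα : 1 ≤ α) (hω : 0 ≤ ω) (hΛ : 0 ≤ Λ)
    (hν : α - 1 < ν) (hν1 : ν < 1) (hτ : 0 ≤ τ) (hs₁ : 0 < s₁)
    (hγ0 : 0 < γ) (hγ : γ < α - (ω + ν)) :
    ∃ C : ℝ, 0 < C ∧
      ∀ (K : ℝ → EuclideanSpace ℝ (Fin (n + 1)) → EuclideanSpace ℝ (Fin (n + 1)) → ℝ) (t : ℝ)
        (x : EuclideanSpace ℝ (Fin (n + 1))), x ≠ 0 →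
        Measurable (fun z => K t x (x + z)) → (∀ z, 0 ≤ K t x (x + z)) →
        (∀ z, z ≠ 0 → K t x (x + z) * ‖z‖ ^ (((n + 1 : ℕ) : ℝ) + α) ≤ Λ * (1 + ‖z‖ ^ ω)) →
        (∀ s, 0 < s → s < s₁ → ‖sphereVecInt (n + 1)
          (fun σ => kAssoc (n + 1) α K t x (s • σ))‖ ≤ τ * s ^ ν) →
        ∃ L : ℝ, HasPVIntegral (n + 1) K t (fun y => ‖y‖ ^ γ) x L ∧
          |L| ≤ C * ‖x‖ ^ (γ - α) * (1 + ‖x‖ ^ (ν + ω)) := by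
  have hν0 : 0 ≤ ν := by linarith
  have hγ1 : γ < 1 := by linarith
  have hd : 0 < 1 + ν - α := by linarith
  obtain ⟨c, hc0, hc⟩ := exists_toSphere_eq_smul n
  obtain ⟨C₀, hC₀, hC⟩ := integrable_of_radial_bound n α ω γ (1 + ν) hω (by linarith) (by linarith)
  set q : ℝ := s₁ ^ (-ν) with hq
  have hq0 : 0 < q := by positivity
  refine ⟨C₀ * (3 * Λ) * (2 + 2 * q) + c * τ / (1 + ν - α) + 1, by positivity,
    fun K t x hx hm h0 hup hcan => ?_⟩
  have hR : 0 < ‖x‖ := norm_pos_iff.2 hx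
  set R := ‖x‖ with hRdef
  have hb := fun p z => kernel_rpow_bound n α ω Λ p _ hup z
  set δ := min (R / 2) s₁ with hδdef
  have hδ : 0 < δ := lt_min (by positivity) hs₁
  have hδR : δ ≤ R := (min_le_left _ _).trans (by linarith)
  obtain ⟨hℓi, L, hL, hLle⟩ := linear_pv n c hc hc0 α ω ν Λ τ δ (by linarith) hω hΛ hν hδ
    (fun z => K t x (x + z)) hm h0 hup
    (fun s hs hsδ => hcan s hs (hsδ.trans_le (min_le_right _ _))) x
  set ℓ : EuclideanSpace ℝ (Fin (n + 1)) → ℝ := fun z =>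
    (Metric.ball 0 δ).indicator (fun z => inner ℝ x z * K t x (x + z)) z with hℓ
  have hℓm : Measurable ℓ :=
    ((measurable_const.inner measurable_id).mul hm).indicator measurableSet_ball
  obtain ⟨hi, hle⟩ := hC R (3 * Λ * (1 + q * R ^ ν))
    (fun z => (R ^ γ - ‖x + z‖ ^ γ) * K t x (x + z) + γ * R ^ (γ - 2) * ℓ z) hR
    (by positivity)
    ((((by fun_prop : Measurable fun z : EuclideanSpace ℝ (Fin (n + 1)) =>
      R ^ γ - ‖x + z‖ ^ γ).mul hm).add (hℓm.const_mul _)).aestronglyMeasurable)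
    (by
      intro z hz hzR
      have h2 := hb (1 + ν) z hz
      have h3 := h0 z
      have h4 : 0 ≤ ‖z‖ ^ (1 + ν) * K t x (x + z) := by positivity
      have hmain : |(R ^ γ - ‖x + z‖ ^ γ) * K t x (x + z) + γ * R ^ (γ - 2) * ℓ z| ≤
          2 * (1 + q * R ^ ν) * R ^ (γ - (1 + ν)) * (‖z‖ ^ (1 + ν) * K t x (x + z)) := by
        by_cases hzδ : ‖z‖ < δ
        · have hℓz : ℓ z = inner ℝ x z * K t x (x + z) := by simp [hℓ, indicator, hzδ]
          rw [hℓz, show (R ^ γ - ‖x + z‖ ^ γ) * K t x (x + z) +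
            γ * R ^ (γ - 2) * (inner ℝ x z * K t x (x + z)) =
            (R ^ γ - ‖x + z‖ ^ γ + γ * R ^ (γ - 2) * inner ℝ x z) * K t x (x + z) by ring,
            abs_mul, abs_of_nonneg h3]
          have h1 := norm_rpow_taylor γ hγ0 hγ1 x z hx hzR
          -- `‖z‖² = ‖z‖^(1+ν) ‖z‖^(1-ν)` and `‖z‖ < R`
          have h5 : ‖z‖ ^ 2 ≤ ‖z‖ ^ (1 + ν) * R ^ (1 - ν) := by
            calc ‖z‖ ^ 2 = ‖z‖ ^ (1 + ν) * ‖z‖ ^ (1 - ν) := by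
                  rw [← Real.rpow_add hz, ← Real.rpow_natCast]; congr 1; push_cast; ring
              _ ≤ _ := by
                  gcongr
                  linarith
          have h6 : R ^ (γ - (1 + ν)) = R ^ (γ - 2) * R ^ (1 - ν) := by
            rw [← Real.rpow_add hR]; congr 1; ring
          have h7 : 0 ≤ q * R ^ ν := by positivity
          calc _ ≤ (2 * R ^ (γ - 2) * ‖z‖ ^ 2) * K t x (x + z) := by gcongr
            _ ≤ (2 * R ^ (γ - 2) * (‖z‖ ^ (1 + ν) * R ^ (1 - ν))) * K t x (x + z) := by gcongr
            _ = 2 * 1 * R ^ (γ - (1 + ν)) * (‖z‖ ^ (1 + ν) * K t x (x + z)) := by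
                rw [h6]; ring
            _ ≤ _ := by gcongr; linarith
        · have hℓz : ℓ z = 0 := by simp [hℓ, indicator, hzδ]
          rw [hℓz, mul_zero, add_zero, abs_mul, abs_of_nonneg h3]
          have hs : s₁ ≤ ‖z‖ := by
            by_contra! h
            exact hzδ (lt_min hzR h)
          have h1 := norm_rpow_first_order γ hγ0 hγ1 x z hx hzR
          have h5 : ‖z‖ ≤ q * ‖z‖ ^ (1 + ν) := by
            have e : ‖z‖ ^ (1 + ν) = ‖z‖ * ‖z‖ ^ ν := by
              rw [Real.rpow_add hz, Real.rpow_one]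
            have e2 : 1 ≤ q * ‖z‖ ^ ν := by
              have : q * s₁ ^ ν = 1 := by
                rw [hq, ← Real.rpow_add hs₁]; simp
              rw [← this]
              gcongr
            rw [e]
            nlinarith
          have h6 : R ^ (γ - 1) = R ^ (γ - (1 + ν)) * R ^ ν := by
            rw [← Real.rpow_add hR]; congr 1; ring
          calc _ ≤ (2 * R ^ (γ - 1) * ‖z‖) * K t x (x + z) := by gcongr
            _ ≤ (2 * R ^ (γ - 1) * (q * ‖z‖ ^ (1 + ν))) * K t x (x + z) := by gcongr
            _ = 2 * (q * R ^ ν) * R ^ (γ - (1 + ν)) * (‖z‖ ^ (1 + ν) * K t x (x + z)) := by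
                rw [h6]; ring
            _ ≤ _ := by gcongr; linarith
      calc _ ≤ 2 * (1 + q * R ^ ν) * R ^ (γ - (1 + ν)) * (‖z‖ ^ (1 + ν) * K t x (x + z)) := hmain
        _ ≤ 3 * (1 + q * R ^ ν) * R ^ (γ - (1 + ν)) * (‖z‖ ^ (1 + ν) * K t x (x + z)) := by
            gcongr; norm_num
        _ ≤ 3 * (1 + q * R ^ ν) * R ^ (γ - (1 + ν)) * _ := mul_le_mul_of_nonneg_left h2 (by positivity)
        _ = _ := by ring)
    (by
      intro z hzR
      have hzδ : ¬ ‖z‖ < δ := not_lt.2 ((min_le_left _ _).trans hzR)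
      have hℓz : ℓ z = 0 := by simp [hℓ, indicator, hzδ]
      rw [hℓz, mul_zero, add_zero, abs_mul, abs_of_nonneg (h0 z)]
      have h1 := norm_rpow_far γ hγ0 hγ1 x z hzR
      have hz : 0 < ‖z‖ := by linarith
      have h2 := hb γ z hz
      have h3 := h0 z
      have h7 : 0 ≤ q * R ^ ν := by positivity
      calc _ ≤ (3 * ‖z‖ ^ γ) * K t x (x + z) := by gcongr
        _ = 3 * 1 * (‖z‖ ^ γ * K t x (x + z)) := by ring
        _ ≤ 3 * (1 + q * R ^ ν) * (‖z‖ ^ γ * K t x (x + z)) := by gcongr; linarith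
        _ ≤ 3 * (1 + q * R ^ ν) * _ := mul_le_mul_of_nonneg_left h2 (by positivity)
        _ = _ := by ring)
  refine ⟨_, hasPVIntegral_of_split n K t _ x _ ℓ (-(γ * R ^ (γ - 2))) L hi
    (fun z => by simp only [← hRdef]; ring) hℓi hL, ?_⟩
  have hP : 0 < R ^ (γ - α) := by positivity
  have hlin : |-(γ * R ^ (γ - 2)) * L| ≤ c * τ / (1 + ν - α) * R ^ (γ - α) * R ^ ν := by
    rw [abs_mul, abs_neg, abs_of_nonneg (by positivity)]
    have e : R ^ (γ - α) * R ^ ν = R ^ (γ - 2) * R * R ^ (1 + ν - α) := by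
      rw [← Real.rpow_add_one hR.ne', ← Real.rpow_add hR, ← Real.rpow_add hR]; congr 1; ring
    calc γ * R ^ (γ - 2) * |L|
        ≤ 1 * R ^ (γ - 2) * (c * R * τ * (R ^ (1 + ν - α) / (1 + ν - α))) := by
          gcongr
          exact hLle.trans (by gcongr)
      _ = c * τ / (1 + ν - α) * (R ^ (γ - 2) * R * R ^ (1 + ν - α)) := by ring
      _ = _ := by rw [← e]; ring
  -- intermediate powers are dominated by the extreme ones
  have hpow : ∀ p, 0 ≤ p → p ≤ ν + ω → R ^ p ≤ 1 + R ^ (ν + ω) := by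
    intro p hp hp'
    have : 0 < R ^ (ν + ω) := by positivity
    rcases le_total R 1 with h | h
    · have := Real.rpow_le_one hR.le h hp
      linarith
    · have := Real.rpow_le_rpow_of_exponent_le h hp'
      linarith
  have p1 := hpow ν hν0 (by linarith)
  have p2 := hpow ω hω (by linarith)
  have p3 : R ^ (ν + ω) = R ^ ν * R ^ ω := Real.rpow_add hR _ _
  have hprod : (1 + q * R ^ ν) * (1 + R ^ ω) ≤ (2 + 2 * q) * (1 + R ^ (ν + ω)) := by
    have := mul_le_mul_of_nonneg_left p1 hq0.le
    have : 0 < R ^ (ν + ω) := by positivity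
    have e : (1 + q * R ^ ν) * (1 + R ^ ω) = 1 + R ^ ω + q * R ^ ν + q * R ^ (ν + ω) := by
      rw [p3]; ring
    rw [e]
    nlinarith
  calc _ ≤ |∫ z, ((R ^ γ - ‖x + z‖ ^ γ) * K t x (x + z) + γ * R ^ (γ - 2) * ℓ z)| +
        |-(γ * R ^ (γ - 2)) * L| := abs_add_le _ _
    _ ≤ C₀ * (3 * Λ) * R ^ (γ - α) * ((1 + q * R ^ ν) * (1 + R ^ ω)) +
        c * τ / (1 + ν - α) * R ^ (γ - α) * R ^ ν := by
        refine add_le_add (hle.trans (le_of_eq (by ring))) hlin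
    _ ≤ C₀ * (3 * Λ) * R ^ (γ - α) * ((2 + 2 * q) * (1 + R ^ (ν + ω))) +
        c * τ / (1 + ν - α) * R ^ (γ - α) * (1 + R ^ (ν + ω)) := by gcongr
    _ ≤ _ := by
        have : 0 ≤ R ^ (γ - α) * (1 + R ^ (ν + ω)) := by positivity
        linarith

/-- Estimate for `T^K_t(|·|^γ)(x)` (Lemma 2.1 of the paper). -/
theorem pv_of_rpow_estimate
    (N : ℕ) (hN : 1 ≤ N)
    (α : ℝ) (hα0 : 0 < α) (hα2 : α < 2)
    (ζ : ℝ≥0∞) (hζ : 0 < ζ)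
    (ω : ℝ) (hω0 : 0 ≤ ω) (hωα : ω < α)
    (Λ : ℝ) (hΛ : 1 ≤ Λ)
    (ν : ℝ) (s₀ : ℝ≥0∞) (τ : ℝ)
    (hcase : 1 ≤ α → α - 1 < ν ∧ ν < 1 ∧ 0 < s₀ ∧ 0 ≤ τ ∧ ν + ω < min (N : ℝ) α)
    (γ : ℝ)
    (hγ1 : α < 1 → 0 < γ ∧ γ < α - ω)
    (hγ2 : 1 ≤ α → max (α - (N : ℝ)) 0 < γ ∧ γ < α - (ω + ν)) :
    ∃ C : ℝ, 0 < C ∧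
      ∀ (T : ℝ≥0∞)
        (K : ℝ → EuclideanSpace ℝ (Fin N) → EuclideanSpace ℝ (Fin N) → ℝ),
        WeakStarKernel N T K α ζ ω Λ ν s₀ τ →
        ∀ (t : ℝ) (x : EuclideanSpace ℝ (Fin N)),
          0 ≤ t → ENNReal.ofReal t ≤ T → x ≠ 0 →
          ∃ L : ℝ, HasPVIntegral N K t (fun y => ‖y‖ ^ γ) x L ∧
            (α < 1 → |L| ≤ C * ‖x‖ ^ (γ - α) * (1 + ‖x‖ ^ ω)) ∧
            (1 ≤ α → |L| ≤ C * ‖x‖ ^ (γ - α) * (1 + ‖x‖ ^ (ν + ω))) := by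
  obtain ⟨n, rfl⟩ : ∃ n, N = n + 1 := ⟨N - 1, by omega⟩
  have hm : ∀ (T : ℝ≥0∞) K, WeakStarKernel (n + 1) T K α ζ ω Λ ν s₀ τ → ∀ t x,
      Measurable fun z => K t x (x + z) := fun T K H t x =>
    H.measurable.comp (measurable_const.prodMk (measurable_const.prodMk (measurable_const_add x)))
  have hup : ∀ (T : ℝ≥0∞) K, WeakStarKernel (n + 1) T K α ζ ω Λ ν s₀ τ → ∀ t x, 0 ≤ t →
      ENNReal.ofReal t ≤ T → ∀ z, z ≠ 0 →
      K t x (x + z) * ‖z‖ ^ (((n + 1 : ℕ) : ℝ) + α) ≤ Λ * (1 + ‖z‖ ^ ω) := by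
    intro T K H t x ht hT z hz
    simpa using H.upper t x (x + z) ht hT (by simpa using hz)
  by_cases hα : α < 1
  · obtain ⟨hγ0, hγ⟩ := hγ1 hα
    obtain ⟨C, hC, h⟩ := pv_case_lt_one n α ω Λ γ hα hω0 (by linarith) hγ0 (by linarith)
    refine ⟨C, hC, fun T K H t x ht hT hx => ?_⟩
    obtain ⟨L, hL, hle⟩ := h K t x hx (hm T K H t x) (fun z => H.nonneg _ _ _)
      (hup T K H t x ht hT)
    exact ⟨L, hL, fun _ => hle, fun h' => absurd hα h'.not_gt⟩
  · have hα' : 1 ≤ α := not_lt.1 hα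
    obtain ⟨hν, hν1, hs₀, hτ, -⟩ := hcase hα'
    obtain ⟨hγ0, hγ⟩ := hγ2 hα'
    obtain ⟨s₁, hs₁, hs₁'⟩ := ENNReal.lt_iff_exists_nnreal_btwn.1 hs₀
    obtain ⟨C, hC, h⟩ := pv_case_one_le n α ω Λ ν τ γ s₁ hα' hω0 (by linarith) hν hν1 hτ
      (by exact_mod_cast hs₁) ((le_max_right _ _).trans_lt hγ0) hγ
    refine ⟨C, hC, fun T K H t x ht hT hx => ?_⟩
    obtain ⟨L, hL, hle⟩ := h K t x hx (hm T K H t x) (fun z => H.nonneg _ _ _)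
      (hup T K H t x ht hT) (fun s hs hss => H.cancel hα' t x s ht hT hs (by
        refine lt_trans ?_ hs₁'
        rw [← ENNReal.ofReal_coe_nnreal]
        exact (ENNReal.ofReal_lt_ofReal_iff (by exact_mod_cast hs₁)).2 hss))
    exact ⟨L, hL, fun h' => absurd h' hα, fun _ => hle⟩
end
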